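/- For every k ≥ 1 and every n ≥ 2, the space Hom(ℤ^k, SL(n,ℂ)) of commuting k-tuples in the special linear group SL(n,ℂ) (with its usual matrix topology) is path-connected and simply connected. -/

import Mathlib

open CategoryTheory
open scoped Manifold

/-- The space `Hom(ℤᵏ, G)` of commuting `k`-tuples in `G`, topologized as a subspace
of `Gᵏ`. -/
def commTuples (G : Type) [Group G] (k : ℕ) : Set (Fin k → G) :=
  {x | ∀ i j, x i * x j = x j * x i}

/-- The trivial tuple `𝟙 = (1, …, 1)`. -/
def trivTuple (G : Type) [Group G] (k : ℕ) : commTuples G k :=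
  ⟨1, fun _ _ => rfl⟩

/-- `SL(n, ℂ)`, topologized as a subspace of the `n × n` complex matrices. -/
noncomputable instance (n : ℕ) : TopologicalSpace (Matrix.SpecialLinearGroup (Fin n) ℂ) :=
  instTopologicalSpaceSubtype

namespace CommTup

open Module Matrix

/-- Square complex matrices. -/
abbrev Mat (n : ℕ) := Matrix (Fin n) (Fin n) ℂ

theorem det_one_add_nilp {n : ℕ} (N : Mat n) (hN : IsNilpotent N) : (1 + N).det = 1 := by
  have h1 : IsNilpotent (-N) := hN.neg
  have h2 := Matrix.isNilpotent_charpoly_sub_pow_of_isNilpotent h1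
  have h3 : (-N).charpoly = Polynomial.X ^ n := by
    have := h2.eq_zero
    rw [sub_eq_zero] at this
    simpa using this
  have h4 := Matrix.eval_charpoly (-N) 1
  rw [h3] at h4
  simp at h4
  rw [← h4]

theorem det_add_nilp_aux {n : ℕ} (M N : Mat n) (hN : IsNilpotent N) (h : Commute M N)
    (hM : M.det ≠ 0) : (M + N).det = M.det := by
  have hu : IsUnit M.det := isUnit_iff_ne_zero.mpr hM
  have e : M + N = M * (1 + M⁻¹ * N) := by
    rw [mul_add, ← mul_assoc, Matrix.mul_nonsing_inv _ hu, one_mul, mul_one]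
  have hc : Commute M⁻¹ N := by
    have hUM : IsUnit M := (Matrix.isUnit_iff_isUnit_det M).mpr hu
    obtain ⟨u, rfl⟩ := hUM
    rw [← Matrix.coe_units_inv]
    exact h.units_inv_left
  rw [e, Matrix.det_mul, det_one_add_nilp, mul_one]
  exact hc.isNilpotent_mul_left hN

theorem det_add_nilp {n : ℕ} (M N : Mat n) (hN : IsNilpotent N) (h : Commute M N) :
    (M + N).det = M.det := by
  by_cases hM : M.det = 0
  · by_contra hne
    have h2 : (M + N).det ≠ 0 := by rwa [hM] at hne
    have := det_add_nilp_aux (M + N) (-N) hN.neg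
      ((h.add_left (Commute.refl N)).neg_right) h2
    simp at this
    exact hne this.symm
  · exact det_add_nilp_aux M N hN h hM

/-- `A` becomes diagonal in the basis `h`. -/
def DiagIn {n : ℕ} (h : (Mat n)ˣ) (A : Mat n) : Prop := (((h⁻¹ : (Mat n)ˣ) : Mat n) * A * (h : Mat n)).IsDiag

theorem DiagIn.exists_eq {n : ℕ} {h : (Mat n)ˣ} {A : Mat n} (H : DiagIn h A) :
    ∃ d : Fin n → ℂ, A = (h : Mat n) * diagonal d * ((h⁻¹ : (Mat n)ˣ) : Mat n) := by
  refine ⟨fun i => (((h⁻¹ : (Mat n)ˣ) : Mat n) * A * (h : Mat n)) i i, ?_⟩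
  have : diagonal (fun i => (((h⁻¹ : (Mat n)ˣ) : Mat n) * A * (h : Mat n)) i i) =
    (((h⁻¹ : (Mat n)ˣ) : Mat n) * A * (h : Mat n)) := H.diagonal_diag
  rw [this]
  simp [mul_assoc]

theorem diagIn_of_eq {n : ℕ} (h : (Mat n)ˣ) (d : Fin n → ℂ) :
    DiagIn h ((h : Mat n) * diagonal d * ((h⁻¹ : (Mat n)ˣ) : Mat n)) := by
  unfold DiagIn
  have : ((h⁻¹ : (Mat n)ˣ) : Mat n) * ((h : Mat n) * diagonal d * ((h⁻¹ : (Mat n)ˣ) : Mat n)) * h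
      = diagonal d := by
    simp [mul_assoc]
  rw [this]
  exact isDiag_diagonal d

theorem DiagIn.isSemisimple {n : ℕ} {h : (Mat n)ˣ} {A : Mat n} (H : DiagIn h A) :
    Module.End.IsSemisimple (Matrix.toLin' A) := by
  obtain ⟨d, rfl⟩ := H.exists_eq
  classical
  let q : Polynomial ℂ := ∏ μ ∈ Finset.univ.image d, (Polynomial.X - Polynomial.C μ)
  have hq : Squarefree q := by
    have : q.Separable := Polynomial.separable_prod_X_sub_C_iff'.mpr (by intro a _ b _ hab; simpa using hab)
    exact this.squarefree
  apply Module.End.isSemisimple_of_squarefree_aeval_eq_zero hq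
  have e1 : Polynomial.aeval (diagonal d) q = 0 := by
    have : diagonal d = Matrix.diagonalAlgHom ℂ d := rfl
    rw [this, Polynomial.aeval_algHom_apply]
    have : Polynomial.aeval d q = 0 := by
      ext i
      rw [Polynomial.aeval_fn_apply]
      simp only [q, Pi.zero_apply, map_prod]
      apply Finset.prod_eq_zero (Finset.mem_image_of_mem d (Finset.mem_univ i))
      simp
    rw [this, map_zero]
  have e2 : Polynomial.aeval ((h : Mat n) * diagonal d * ((h⁻¹ : (Mat n)ˣ) : Mat n)) q
      = (h : Mat n) * Polynomial.aeval (diagonal d) q * ((h⁻¹ : (Mat n)ˣ) : Mat n) := by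
    induction q using Polynomial.induction_on with
    | C a => simp [Algebra.algebraMap_eq_smul_one]
    | add p q hp hq => rw [map_add, map_add, hp, hq, mul_add, add_mul]
    | monomial m a _ =>
      simp only [map_mul, Polynomial.aeval_C, map_pow, Polynomial.aeval_X]
      rw [Units.conj_pow]
      simp [Algebra.algebraMap_eq_smul_one]
  have e3 : Polynomial.aeval (Matrix.toLin' ((h : Mat n) * diagonal d * ((h⁻¹ : (Mat n)ˣ) : Mat n))) q
     = Matrix.toLinAlgEquiv' (Polynomial.aeval ((h : Mat n) * diagonal d * ((h⁻¹ : (Mat n)ˣ) : Mat n)) q) :=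
    Polynomial.aeval_algHom_apply (Matrix.toLinAlgEquiv' : Mat n ≃ₐ[ℂ] _) _ _
  rw [e3, e2, e1]; simp

theorem exists_simul_diag {n : ℕ} {ι : Type} (f : ι → Mat n) (hc : ∀ i j, Commute (f i) (f j))
    (hs : ∀ i, Module.End.IsSemisimple (Matrix.toLin' (f i))) : ∃ h : (Mat n)ˣ, ∀ i, DiagIn h (f i) := by
  let F : ι → Module.End ℂ (Fin n → ℂ) := fun i => Matrix.toLin' (f i)
  have hF : Pairwise fun i j => Commute (F i) (F j) := by
    intro i j _
    have := (hc i j).map (Matrix.toLinAlgEquiv' : Mat n ≃ₐ[ℂ] _)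
    exact this
  have htop := Module.End.iSup_iInf_maxGenEigenspace_eq_top_of_iSup_maxGenEigenspace_eq_top_of_commute
    F hF (fun i => Module.End.iSup_maxGenEigenspace_eq_top (F i))
  have hfs : ∀ i, (F i).IsFinitelySemisimple := fun i => (hs i).isFinitelySemisimple
  let S : Set (Fin n → ℂ) := {v | ∀ i, ∃ μ : ℂ, F i v = μ • v}
  have hS : Submodule.span ℂ S = ⊤ := by
    rw [eq_top_iff, ← htop]
    apply iSup_le
    intro χ v hv
    apply Submodule.subset_span
    intro i
    rw [Submodule.mem_iInf] at hv
    have := hv i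
    rw [(hfs i).maxGenEigenspace_eq_eigenspace, Module.End.mem_eigenspace_iff] at this
    exact ⟨_, this⟩
  obtain ⟨b, hbS, hbspan, hbli⟩ := exists_linearIndependent ℂ S
  let B : Module.Basis b ℂ (Fin n → ℂ) := Module.Basis.mk hbli (by
    rw [Subtype.range_coe, hbspan, hS])
  have : Fintype b := FiniteDimensional.fintypeBasisIndex B
  have hcard : Fintype.card b = n := by
    rw [← Module.finrank_eq_card_basis B]; simp
  let B' : Module.Basis (Fin n) ℂ (Fin n → ℂ) := B.reindex (Fintype.equivFinOfCardEq hcard)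
  have hB' : ∀ j, B' j ∈ S := by
    intro j
    apply hbS
    simp [B', B]
  choose μ hμ using hB'
  let P : Mat n := (Pi.basisFun ℂ (Fin n)).toMatrix B'
  let Q : Mat n := B'.toMatrix (Pi.basisFun ℂ (Fin n))
  have hPQ : P * Q = 1 := Module.Basis.toMatrix_mul_toMatrix_flip _ _
  have hQP : Q * P = 1 := Module.Basis.toMatrix_mul_toMatrix_flip _ _
  refine ⟨⟨P, Q, hPQ, hQP⟩, fun i => ?_⟩
  have key : f i * P = P * diagonal (fun j => μ j i) := by
    ext r j
    have := congrFun (hμ j i) r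
    rw [Matrix.mul_diagonal, Matrix.mul_apply]
    simp only [F, Matrix.toLin'_apply, Matrix.mulVec, dotProduct, Pi.smul_apply, smul_eq_mul] at this
    simp only [P, Module.Basis.toMatrix_apply, Pi.basisFun_repr]
    rw [this, mul_comm]
  unfold DiagIn
  change (Q * f i * P).IsDiag
  rw [mul_assoc, key, ← mul_assoc, hQP, one_mul]
  exact isDiag_diagonal _

theorem exists_jc {n k : ℕ} (x : Fin k → Mat n) (hc : ∀ i j, Commute (x i) (x j)) :
    ∃ (z : Fin k → Mat n) (h : (Mat n)ˣ), (∀ i, DiagIn h (z i)) ∧ (∀ i j, Commute (z i) (z j)) ∧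
      (∀ i j, Commute (x i) (z j)) ∧ ∀ i, IsNilpotent (x i - z i) := by
  have H : ∀ i, ∃ z : Mat n, (∀ A : Mat n, Commute (x i) A → Commute z A) ∧ IsNilpotent (x i - z) ∧
      Module.End.IsSemisimple (Matrix.toLin' z) := by
    intro i
    obtain ⟨N, hN, s, hs, hNn, hss, he⟩ :=
      Module.End.exists_isNilpotent_isSemisimple (f := Matrix.toLin' (x i))
    let φ : Mat n ≃ₐ[ℂ] Module.End ℂ (Fin n → ℂ) := Matrix.toLinAlgEquiv'
    have hφs : Matrix.toLin' (φ.symm s) = s := φ.apply_symm_apply s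
    refine ⟨φ.symm s, ?_, ?_, ?_⟩
    · intro A hA
      have h1 : Commute (Matrix.toLin' (x i)) (φ A) := hA.map φ
      have h2 : Commute (φ A) s := by
        have := Algebra.commute_of_mem_adjoin_singleton_of_commute hs h1.symm
        exact this
      have := h2.symm.map φ.symm
      simpa using this
    · have : x i - φ.symm s = φ.symm N := by
        apply φ.injective
        rw [map_sub, φ.apply_symm_apply, φ.apply_symm_apply, sub_eq_iff_eq_add]
        exact he
      rw [this]
      exact hNn.map φ.symm
    · rw [hφs]; exact hss
  choose z hz1 hz2 hz3 using H
  have hxz : ∀ i j, Commute (x i) (z j) := fun i j => (hz1 j _ (hc j i)).symm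
  have hzz : ∀ i j, Commute (z i) (z j) := fun i j => hz1 i _ (hxz i j)
  obtain ⟨h, hh⟩ := exists_simul_diag z hzz hz3
  exact ⟨z, h, hh, hzz, hxz, hz2⟩

/-- two commuting diagonalizable tuples which commute with each other -/
theorem exists_simul_diag_two {n k : ℕ} (z w : Fin k → Mat n) (h h' : (Mat n)ˣ)
    (hz : ∀ i, DiagIn h (z i)) (hw : ∀ i, DiagIn h' (w i)) (hzz : ∀ i j, Commute (z i) (z j))
    (hww : ∀ i j, Commute (w i) (w j)) (hzw : ∀ i j, Commute (z i) (w j)) :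
    ∃ g : (Mat n)ˣ, (∀ i, DiagIn g (z i)) ∧ ∀ i, DiagIn g (w i) := by
  obtain ⟨g, hg⟩ := exists_simul_diag (Sum.elim z w) (by
    rintro (i | i) (j | j)
    · exact hzz i j
    · exact hzw i j
    · exact (hzw j i).symm
    · exact hww i j) (by
    rintro (i | i)
    · exact (hz i).isSemisimple
    · exact (hw i).isSemisimple)
  exact ⟨g, fun i => hg (Sum.inl i), fun i => hg (Sum.inr i)⟩


section Generic

open unitInterval Topology

variable {X : Type*} [TopologicalSpace X]


instance contractible_square : ContractibleSpace (I × I) := by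
  rw [contractible_iff_id_nullhomotopic]
  refine ⟨(0, 0), ⟨⟨⟨fun q => (σ q.1 * q.2.1, σ q.1 * q.2.2), by fun_prop⟩, ?_, ?_⟩⟩⟩
  · rintro ⟨a, b⟩; simp
  · rintro ⟨a, b⟩; simp

theorem paths_in_square {K : I × I → X} (hK : Continuous K) {u v : I × I} (P Q : Path u v)
    {a b : X} (p q : Path a b) (hp : ∀ t, p t = K (P t)) (hq : ∀ t, q t = K (Q t)) :
    p.Homotopic q := by
  have ha : a = K u := by rw [← p.source, hp, P.source]
  have hb : b = K v := by rw [← p.target, hp, P.target]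
  subst ha hb
  have h1 : p = P.map hK := by ext t; exact hp t
  have h2 : q = Q.map hK := by ext t; exact hq t
  rw [h1, h2]
  exact (SimplyConnectedSpace.paths_homotopic P Q).map ⟨K, hK⟩

/-- Path in the square along first coordinate. -/
def hPath (s : I) : Path ((0 : I), s) ((1 : I), s) where
  toFun t := (t, s)
  source' := rfl
  target' := rfl
/-- Path in the square along second coordinate. -/
def vPath (s : I) : Path (s, (0 : I)) (s, (1 : I)) where
  toFun t := (s, t)
  source' := rfl
  target' := rfl
/-- Diagonal path in the square. -/
def dPath : Path ((0 : I), (0 : I)) ((1 : I), (1 : I)) where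
  toFun t := (t, t)
  source' := rfl
  target' := rfl

theorem trans_map_eq {K : I × I → X} {u v w : I × I} (P : Path u v) (Q : Path v w)
    {a b c : X} (p : Path a b) (q : Path b c) (hp : ∀ t, p t = K (P t)) (hq : ∀ t, q t = K (Q t)) :
    ∀ t, (p.trans q) t = K ((P.trans Q) t) := by
  intro t
  simp only [Path.trans_apply]
  split_ifs
  · exact hp _
  · exact hq _

theorem square {K : I × I → X} (hK : Continuous K) {a b c d : X}
    (p : Path a b) (q : Path b d) (r : Path a c) (s : Path c d)
    (hp : ∀ t, p t = K (t, 0)) (hq : ∀ t, q t = K (1, t))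
    (hr : ∀ t, r t = K (0, t)) (hs : ∀ t, s t = K (t, 1)) :
    (p.trans q).Homotopic (r.trans s) :=
  paths_in_square hK ((hPath 0).trans (vPath 1)) ((vPath 0).trans (hPath 1)) _ _
    (trans_map_eq (hPath 0) (vPath 1) p q hp hq) (trans_map_eq (vPath 0) (hPath 1) r s hr hs)

theorem diag_square {K : I × I → X} (hK : Continuous K) {a b d : X}
    (p : Path a b) (q : Path b d) (r : Path a d)
    (hp : ∀ t, p t = K (t, 0)) (hq : ∀ t, q t = K (1, t))
    (hr : ∀ t, r t = K (t, t)) :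
    r.Homotopic (p.trans q) :=
  paths_in_square hK dPath ((hPath 0).trans (vPath 1)) _ _
    hr (trans_map_eq (hPath 0) (vPath 1) p q hp hq)

theorem homotopic_of_square {K : I × I → X} (hK : Continuous K) {a b : X}
    (p q : Path a b) (hp : ∀ t, p t = K (0, t)) (hq : ∀ t, q t = K (1, t))
    (h0 : ∀ t, K (t, 0) = a) (h1 : ∀ t, K (t, 1) = b) : p.Homotopic q := by
  have := square hK (Path.refl a) q p (Path.refl b) (fun t => (h0 t).symm) hq hp
    (fun t => (h1 t).symm)
  rw [← Path.Homotopic.Quotient.eq] at this ⊢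
  simpa using this.symm

theorem local_global {b : X} (Good : ∀ x, Path b x → Prop)
    (hhom : ∀ x (p q : Path b x), p.Homotopic q → Good x p → Good x q)
    (hloc : ∀ a : X, ∃ U ∈ 𝓝 a, ∀ (x y : X) (γ : Path x y), (∀ t, γ t ∈ U) →
      ∀ p, Good x p → Good y (p.trans γ)) :
    ∀ (x y : X) (γ : Path x y) (p : Path b x), Good x p → Good y (p.trans γ) := by
  intro x y γ p hp
  choose U hU hg using hloc
  obtain ⟨t, ht0, hmono, ⟨m, hm⟩, hsub⟩ :=
    exists_monotone_Icc_subset_open_cover_unitInterval (c := fun a : X => γ ⁻¹' (interior (U a)))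
      (fun a => isOpen_interior.preimage γ.continuous) (by
        intro s _
        rw [Set.mem_iUnion]
        exact ⟨γ s, mem_interior_iff_mem_nhds.mpr (hU _)⟩)
  have cast1 : ∀ (x' : X) (hx : x' = x), Good x' (p.cast rfl hx) := by
    rintro _ rfl; exact hp
  have cast2 : ∀ (y' : X) (hy : y' = y) (r : Path b y'), Good y' r → Good y (r.cast rfl hy.symm) := by
    rintro _ rfl r hr; exact hr
  let q : Path b (γ 0) := p.cast rfl γ.source
  have hq : Good (γ 0) q := cast1 _ γ.source
  have key : ∀ j, Good (γ (t j)) (q.trans (γ.subpath 0 (t j))) := by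
    intro j
    induction j with
    | zero =>
      generalize t 0 = s at ht0
      subst ht0
      refine hhom _ _ _ ?_ hq
      rw [Path.subpath_self, ← Path.Homotopic.Quotient.eq]
      simp
    | succ j ih =>
      obtain ⟨a, ha⟩ := hsub j
      have h1 := hg a _ _ (γ.subpath (t j) (t (j + 1))) (by
        intro s
        have : γ.subpath (t j) (t (j+1)) s ∈ Set.range (γ.subpath (t j) (t (j+1))) := ⟨s, rfl⟩
        rw [Path.range_subpath_of_le _ _ _ (hmono (Nat.le_succ j))] at this
        obtain ⟨r, hr, hr2⟩ := this
        rw [← hr2]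
        exact interior_subset (ha hr)) _ ih
      refine hhom _ _ _ ?_ h1
      have h2 : ((γ.subpath 0 (t j)).trans (γ.subpath (t j) (t (j + 1)))).Homotopic _ :=
        ⟨Path.Homotopy.subpathTransSubpath γ 0 (t j) (t (j+1))⟩
      rw [← Path.Homotopic.Quotient.eq] at h2 ⊢
      simp only [Path.Homotopic.Quotient.mk_trans] at h2 ⊢
      rw [← h2, Path.Homotopic.Quotient.trans_assoc]
  have hfin := key m
  have hm1 := hm m le_rfl
  generalize t m = s at hfin hm1
  subst hm1
  have := cast2 _ γ.target _ hfin
  refine hhom _ _ _ ?_ this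
  rw [Path.subpath_zero_one]
  have e : (q.trans (γ.cast γ.source γ.target)).cast rfl γ.target.symm = p.trans γ := by
    ext s
    simp [q, Path.trans_apply]
  rw [e]

theorem quot_cancel {a b c : X} (e : Path.Homotopic.Quotient a b) (f : Path.Homotopic.Quotient b c) :
    (e.trans f).symm.trans e = f.symm := by
  have h1 : ((e.trans f).symm.trans e).trans f = Path.Homotopic.Quotient.refl c := by
    rw [Path.Homotopic.Quotient.trans_assoc]; simp
  calc (e.trans f).symm.trans e = (((e.trans f).symm.trans e).trans f).trans f.symm := by
        rw [Path.Homotopic.Quotient.trans_assoc _ f]; simp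
    _ = f.symm := by rw [h1]; simp

end Generic


section Space

open unitInterval Topology Matrix

variable {n k : ℕ}

/-- commuting tuples of determinant one matrices -/
abbrev CX (k n : ℕ) := {x : Fin k → Mat n // (∀ i j, Commute (x i) (x j)) ∧ ∀ i, (x i).det = 1}

/-- trivial tuple -/
def base (k n : ℕ) : CX k n := ⟨fun _ => 1, fun _ _ => Commute.refl _, fun _ => det_one⟩

/-- unit from nonzero determinant -/
noncomputable def toU (A : Mat n) (h : A.det ≠ 0) : (Mat n)ˣ :=
  ⟨A, A⁻¹, A.mul_nonsing_inv (isUnit_iff_ne_zero.mpr h), A.nonsing_inv_mul (isUnit_iff_ne_zero.mpr h)⟩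

theorem continuous_toU {Y : Type*} [TopologicalSpace Y] (f : Y → Mat n) (hf : Continuous f)
    (hd : ∀ y, (f y).det ≠ 0) : Continuous fun y => toU (f y) (hd y) := by
  rw [Units.continuous_iff]
  refine ⟨hf, ?_⟩
  have : (fun y => (((toU (f y) (hd y))⁻¹ : (Mat n)ˣ) : Mat n)) = fun y => ((f y).det)⁻¹ • (f y).adjugate := by
    ext1 y
    change (f y)⁻¹ = _
    rw [Matrix.inv_def, Ring.inverse_eq_inv']
  change Continuous (fun y => (((toU (f y) (hd y))⁻¹ : (Mat n)ˣ) : Mat n))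
  rw [this]
  exact (hf.matrix_det.inv₀ hd).smul hf.matrix_adjugate

theorem exists_unit_path (c : (Mat n)ˣ) : ∃ v : I → (Mat n)ˣ, Continuous v ∧ v 0 = 1 ∧ v 1 = c ∧
    ∀ t (A : Mat n), Commute (c : Mat n) A → Commute (v t : Mat n) A := by
  let N : Mat n := (c : Mat n) - 1
  let p : Polynomial ℂ := Matrix.det (1 + (Polynomial.X : Polynomial ℂ) • N.map Polynomial.C)
  have hp : ∀ ζ : ℂ, p.eval ζ = (1 + ζ • N).det := by
    intro ζ
    rw [← Polynomial.coe_evalRingHom, RingHom.map_det]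
    congr 1
    ext i j
    simp [Matrix.one_apply, apply_ite (Polynomial.eval ζ)]
    ring
  have hp0 : p ≠ 0 := by
    intro h0
    have := hp 0
    rw [h0] at this
    simp at this
  let s : Set ℂ := {ζ | p.eval ζ = 0}
  have hs : s.Countable := by
    have : s = p.rootSet ℂ := by
      ext ζ
      simp [s, Polynomial.mem_rootSet, hp0]
    rw [this]
    exact (Polynomial.rootSet_finite p ℂ).countable
  have hconn := hs.isPathConnected_compl_of_one_lt_rank (by rw [Complex.rank_real_complex]; simp)
  have h0 : (0 : ℂ) ∈ sᶜ := by
    simp [s, hp]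
  have h1 : (1 : ℂ) ∈ sᶜ := by
    have := (Matrix.isUnit_iff_isUnit_det (c : Mat n)).mp c.isUnit
    simpa [s, hp, N] using this.ne_zero
  obtain ⟨γ, hγ⟩ := hconn.joinedIn 0 h0 1 h1
  have hd : ∀ t, (1 + γ t • N).det ≠ 0 := by
    intro t
    rw [← hp]
    exact hγ t
  refine ⟨fun t => toU (1 + γ t • N) (hd t), continuous_toU _ (by fun_prop) _, ?_, ?_, ?_⟩
  · ext1; simp [toU]
  · ext1; simp [toU, N]
  · intro t A hA
    change Commute (1 + γ t • N) A
    exact (Commute.one_left A).add_left ((hA.sub_left (Commute.one_left A)).smul_left _)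

/-- conjugation on tuples -/
def conj (u : (Mat n)ˣ) (x : CX k n) : CX k n :=
  ⟨fun i => (u : Mat n) * x.1 i * ((u⁻¹ : (Mat n)ˣ) : Mat n), by
    intro i j
    have := x.2.1 i j
    have h := congrArg (fun A => (u : Mat n) * A * ((u⁻¹ : (Mat n)ˣ) : Mat n)) this.eq
    change _ * _ = _ * _
    simpa only [mul_assoc, Units.inv_mul_cancel_left] using h, by
    intro i
    rw [det_units_conj]
    exact x.2.2 i⟩

theorem continuous_conj {Y : Type*} [TopologicalSpace Y] {u : Y → (Mat n)ˣ} {x : Y → CX k n}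
    (hu : Continuous u) (hx : Continuous x) : Continuous fun y => conj (u y) (x y) := by
  apply Continuous.subtype_mk
  apply continuous_pi
  intro i
  have h1 := (Units.continuous_iff.mp hu).1
  have h2 := (Units.continuous_iff.mp hu).2
  have h3 : Continuous fun y => (x y).1 i := (continuous_apply i).comp (continuous_subtype_val.comp hx)
  exact (h1.mul h3).mul h2

@[simp] theorem conj_one (x : CX k n) : conj 1 x = x := by
  apply Subtype.ext; funext i; simp [conj]

@[simp] theorem conj_base (u : (Mat n)ˣ) : conj u (base k n) = base k n := by
  apply Subtype.ext; funext i
  change (u : Mat n) * 1 * ((u⁻¹ : (Mat n)ˣ) : Mat n) = 1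
  rw [mul_one, Units.mul_inv]

theorem conj_mul (u v : (Mat n)ˣ) (x : CX k n) : conj (u * v) x = conj u (conj v x) := by
  apply Subtype.ext; funext i
  simp only [conj, Units.val_mul, _root_.mul_inv_rev, mul_assoc]

theorem conj_eq_self {u : (Mat n)ˣ} {x : CX k n} (h : ∀ i, Commute (u : Mat n) (x.1 i)) :
    conj u x = x := by
  apply Subtype.ext; funext i
  change (u : Mat n) * x.1 i * ((u⁻¹ : (Mat n)ˣ) : Mat n) = _
  rw [(h i).eq, mul_assoc, Units.mul_inv, mul_one]

/-- tuple is diagonal in basis `h` -/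
def TDiag (h : (Mat n)ˣ) (x : CX k n) : Prop := ∀ i, DiagIn h (x.1 i)

theorem TDiag.conj {h : (Mat n)ˣ} {x : CX k n} (H : TDiag h x) (u : (Mat n)ˣ) :
    TDiag (u * h) (conj u x) := by
  intro i
  have := H i
  unfold DiagIn at *
  have e : (((u * h)⁻¹ : (Mat n)ˣ) : Mat n) * (CommTup.conj u x).1 i * ((u * h : (Mat n)ˣ) : Mat n)
      = ((h⁻¹ : (Mat n)ˣ) : Mat n) * x.1 i * (h : Mat n) := by
    simp only [CommTup.conj, Units.val_mul, _root_.mul_inv_rev, mul_assoc, Units.inv_mul_cancel_left]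
  rw [e]; exact this

/-- conjugate path -/
noncomputable def conjPath (u : (Mat n)ˣ) {z : CX k n} (q : Path (base k n) z) : Path (base k n) (conj u z) where
  toFun t := conj u (q t)
  continuous_toFun := continuous_conj continuous_const q.continuous
  source' := by simp
  target' := by simp

theorem slide {z w : CX k n} (q : Path (base k n) z) (v : I → (Mat n)ˣ) (hv : Continuous v)
    (hv0 : v 0 = 1) (b : Path z w) (hb : ∀ t, b t = conj (v t) z) :
    ∃ q' : Path (base k n) w, (q.trans b).Homotopic q' ∧ ∀ t, q' t = conj (v 1) (q t) := by
  have hw : conj (v 1) z = w := by rw [← hb]; simp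
  subst hw
  refine ⟨conjPath (v 1) q, ?_, fun t => rfl⟩
  have := square (K := fun p : I × I => conj (v p.1) (q p.2))
    (continuous_conj (hv.comp continuous_fst) (q.continuous.comp continuous_snd))
    (Path.refl _) (conjPath (v 1) q) q b (by simp) (fun t => rfl) (by simp [hv0]) (by simp [hb])
  rw [← Path.Homotopic.Quotient.eq] at this ⊢
  rw [← this]; simp

/-- two simultaneous diagonalizations differ by a permutation -/
theorem exists_perm {z : CX k n} {h h' : (Mat n)ˣ} (H : TDiag h z) (H' : TDiag h' z) :
    ∃ P : (Mat n)ˣ, (∀ d : Fin n → ℂ, (((P : (Mat n)ˣ) : Mat n) * diagonal d * ((P⁻¹ : (Mat n)ˣ) : Mat n)).IsDiag) ∧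
      ∀ i, Commute ((h' * P * h⁻¹ : (Mat n)ˣ) : Mat n) (z.1 i) := by
  choose d hd using fun i => (H i).exists_eq
  choose d' hd' using fun i => (H' i).exists_eq
  let M : Mat n := ((h'⁻¹ * h : (Mat n)ˣ) : Mat n)
  have hM : M.det ≠ 0 := ((Matrix.isUnit_iff_isUnit_det M).mp (h'⁻¹ * h).isUnit).ne_zero
  have hintw : ∀ i, M * diagonal (d i) = diagonal (d' i) * M := by
    intro i
    have e : (h : Mat n) * diagonal (d i) * ((h⁻¹ : (Mat n)ˣ) : Mat n) =
      (h' : Mat n) * diagonal (d' i) * ((h'⁻¹ : (Mat n)ˣ) : Mat n) := by rw [← hd, ← hd']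
    have e2 := congrArg (fun A => ((h'⁻¹ : (Mat n)ˣ) : Mat n) * A * (h : Mat n)) e
    simpa only [M, Units.val_mul, mul_assoc, Units.inv_mul_cancel_left, Units.inv_mul, mul_one] using e2
  obtain ⟨π, hπ⟩ : ∃ π : Equiv.Perm (Fin n), ∀ j, M (π j) j ≠ 0 := by
    by_contra hcon
    push Not at hcon
    apply hM
    rw [Matrix.det_apply]
    apply Finset.sum_eq_zero
    intro π _
    obtain ⟨j, hj⟩ := hcon π
    have hz : ∏ i, M (π i) i = 0 := Finset.prod_eq_zero (Finset.mem_univ j) hj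
    rw [hz, smul_zero]
  have hdd : ∀ i j, d' i (π j) = d i j := by
    intro i j
    have := congrFun (congrFun (hintw i) (π j)) j
    rw [Matrix.mul_diagonal, Matrix.diagonal_mul, mul_comm] at this
    exact (mul_right_cancel₀ (hπ j) this).symm
  let Q : Mat n := (π.symm).toPEquiv.toMatrix
  let Q' : Mat n := π.toPEquiv.toMatrix
  have hQQ : Q * Q' = 1 := by
    simp only [Q, Q']
    rw [← PEquiv.toMatrix_trans, ← Equiv.toPEquiv_trans]
    simp
  have hQQ' : Q' * Q = 1 := by
    simp only [Q, Q']
    rw [← PEquiv.toMatrix_trans, ← Equiv.toPEquiv_trans]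
    simp
  have hcomm : ∀ c : Fin n → ℂ, Q * diagonal c = diagonal (c ∘ π.symm) * Q := by
    intro c
    ext a b
    rw [Matrix.mul_diagonal, Matrix.diagonal_mul]
    simp only [Q, PEquiv.toMatrix_apply, Equiv.toPEquiv_apply, Option.mem_def, Option.some.injEq]
    split_ifs with hab
    · subst hab; simp
    · simp
  let P : (Mat n)ˣ := ⟨Q, Q', hQQ, hQQ'⟩
  have hPd : ∀ c : Fin n → ℂ, (P : Mat n) * diagonal c * ((P⁻¹ : (Mat n)ˣ) : Mat n) = diagonal (c ∘ π.symm) := by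
    intro c
    change Q * diagonal c * Q' = _
    rw [hcomm, mul_assoc, hQQ, mul_one]
  refine ⟨P, fun c => by rw [hPd]; exact isDiag_diagonal _, fun i => ?_⟩
  have e : d' i = d i ∘ π.symm := by
    funext a
    have := hdd i (π.symm a)
    simpa using this
  change _ * _ = _ * _
  conv_lhs => rw [hd]
  rw [hd', e, ← hPd]
  simp only [Units.val_mul, mul_assoc, Units.inv_mul_cancel_left]

theorem change_basis {z : CX k n} {h h' : (Mat n)ˣ} (q : Path (base k n) z)
    (hq : ∀ t, TDiag h (q t)) (H' : TDiag h' z) :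
    ∃ q' : Path (base k n) z, q.Homotopic q' ∧ ∀ t, TDiag h' (q' t) := by
  have H : TDiag h z := by have := hq 1; simpa using this
  obtain ⟨P, hP, hc⟩ := exists_perm H H'
  obtain ⟨v, hv, hv0, hv1, hvc⟩ := exists_unit_path (h' * P * h⁻¹)
  have hfix : ∀ t, conj (v t) z = z := fun t => conj_eq_self fun i => hvc t _ (hc i)
  obtain ⟨q', h1, h2⟩ := slide q v hv hv0 (Path.refl z) (fun t => (hfix t).symm)
  refine ⟨q', ?_, ?_⟩
  · rw [← Path.Homotopic.Quotient.eq] at h1 ⊢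
    simpa using h1
  · intro t i
    rw [h2, hv1]
    obtain ⟨d, hd⟩ := (hq t i).exists_eq
    unfold DiagIn
    simp only [conj]
    rw [hd]
    have := hP d
    convert this using 1
    simp only [Units.val_mul, _root_.mul_inv_rev, inv_inv, mul_assoc, Units.inv_mul_cancel_left, Units.inv_mul, mul_one]

end Space


section Nu

open unitInterval Topology Matrix

variable {n k : ℕ}

/-- normalize the determinant -/
noncomputable def nu (A : Mat n) : Mat n := (A.det ^ (-(1 : ℂ) / n)) • A

theorem nu_of_det {A : Mat n} (h : A.det = 1) : nu A = A := by
  simp [nu, h]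

theorem det_nu [NeZero n] {A : Mat n} (h : A.det ∈ Complex.slitPlane) : (nu A).det = 1 := by
  have h0 : A.det ≠ 0 := Complex.slitPlane_ne_zero h
  have hn : (n : ℂ) ≠ 0 := Nat.cast_ne_zero.mpr (NeZero.ne n)
  unfold nu
  rw [det_smul, Fintype.card_fin, ← Complex.cpow_mul_nat, div_mul_cancel₀ _ hn, Complex.cpow_neg_one,
    inv_mul_cancel₀ h0]

/-- linear interpolation -/
noncomputable def lin (s : I) (A B : Mat n) : Mat n := (1 - ((s : ℝ) : ℂ)) • A + ((s : ℝ) : ℂ) • B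

@[simp] theorem lin_zero (A B : Mat n) : lin 0 A B = A := by simp [lin]
@[simp] theorem lin_one (A B : Mat n) : lin 1 A B = B := by simp [lin]

theorem lin_commute (s : I) {A B C : Mat n} (h1 : Commute A C) (h2 : Commute B C) :
    Commute (lin s A B) C :=
  (h1.smul_left _).add_left (h2.smul_left _)

/-- compatible tuples -/
def Compat (x y : CX k n) : Prop := (∀ i j, Commute (x.1 i) (y.1 j)) ∧
  ∀ (s : I) i, (lin s (x.1 i) (y.1 i)).det ∈ Complex.slitPlane

/-- interpolated point -/
noncomputable def nuPt [NeZero n] (s : I) (x y : CX k n) (hc : Compat x y) : CX k n :=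
  ⟨fun i => nu (lin s (x.1 i) (y.1 i)), fun i j => by
    apply Commute.smul_left
    apply Commute.smul_right
    apply lin_commute
    · exact (lin_commute s (x.2.1 j i) (hc.1 i j).symm).symm
    · exact (lin_commute s (hc.1 j i) (y.2.1 j i)).symm,
    fun i => det_nu (hc.2 s i)⟩

theorem continuous_nuPt [NeZero n] {Y : Type*} [TopologicalSpace Y] {s : Y → I} {x y : Y → CX k n}
    (hs : Continuous s) (hx : Continuous x) (hy : Continuous y) (hc : ∀ p, Compat (x p) (y p)) :
    Continuous fun p => nuPt (s p) (x p) (y p) (hc p) := by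
  apply Continuous.subtype_mk
  apply continuous_pi
  intro i
  have h1 : Continuous fun p => (x p).1 i := (continuous_apply i).comp (continuous_subtype_val.comp hx)
  have h2 : Continuous fun p => (y p).1 i := (continuous_apply i).comp (continuous_subtype_val.comp hy)
  have h3 : Continuous fun p => (((s p : I) : ℝ) : ℂ) := by fun_prop
  have h4 : Continuous fun p => lin (s p) ((x p).1 i) ((y p).1 i) := by
    unfold lin; fun_prop
  unfold nu
  exact (h4.matrix_det.cpow continuous_const (fun p => (hc p).2 (s p) i)).smul h4

theorem nuPt_zero [NeZero n] {x y : CX k n} (hc : Compat x y) : nuPt 0 x y hc = x := by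
  apply Subtype.ext; funext i
  simp only [nuPt, lin_zero]
  exact nu_of_det (x.2.2 i)

theorem nuPt_one [NeZero n] {x y : CX k n} (hc : Compat x y) : nuPt 1 x y hc = y := by
  apply Subtype.ext; funext i
  simp only [nuPt, lin_one]
  exact nu_of_det (y.2.2 i)

/-- interpolation path -/
noncomputable def nuPath [NeZero n] (x y : CX k n) (hc : Compat x y) : Path x y where
  toFun s := nuPt s x y hc
  continuous_toFun := continuous_nuPt continuous_id continuous_const continuous_const (fun _ => hc)
  source' := nuPt_zero hc
  target' := nuPt_one hc

theorem nuPt_congr [NeZero n] (s : I) {x y x' y' : CX k n} (hc : Compat x y) (hc' : Compat x' y')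
    (hx : x = x') (hy : y = y') : nuPt s x y hc = nuPt s x' y' hc' := by
  subst hx hy; rfl

theorem nu_square [NeZero n] {x y x0 y0 : CX k n} (α : Path x y) (β : Path x0 y0)
    (hc : ∀ t, Compat (α t) (β t)) (h0 : Compat x x0) (h1 : Compat y y0) :
    (α.trans (nuPath y y0 h1)).Homotopic ((nuPath x x0 h0).trans β) := by
  apply square (K := fun p : I × I => nuPt p.2 (α p.1) (β p.1) (hc p.1))
    (continuous_nuPt continuous_snd (α.continuous.comp continuous_fst)
      (β.continuous.comp continuous_fst) _)
  · intro t; exact (nuPt_zero _).symm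
  · intro t; exact nuPt_congr _ h1 _ α.target.symm β.target.symm
  · intro t; exact nuPt_congr _ h0 _ α.source.symm β.source.symm
  · intro t; exact (nuPt_one _).symm

theorem det_lin_nilp {A B C : Mat n} (hAB : Commute A B) (hAC : Commute A C) (hBC : Commute B C)
    (hN : IsNilpotent (B - A)) (s τ : I) :
    (lin s (lin τ A B) C).det = (lin s B C).det := by
  have e : lin s (lin τ A B) C = lin s B C +
      (-((1 - ((s : ℝ) : ℂ)) * (1 - ((τ : ℝ) : ℂ)))) • (B - A) := by
    unfold lin
    module
  rw [e]
  apply det_add_nilp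
  · exact hN.smul _
  · apply Commute.smul_right
    apply lin_commute
    · exact (Commute.refl B).sub_right hAB.symm
    · exact hBC.symm.sub_right hAC.symm

theorem det_lin_one {A B : Mat n} (hAB : Commute A B) (hN : IsNilpotent (B - A)) (hB : B.det = 1)
    (τ : I) : (lin τ A B).det = 1 := by
  have := det_lin_nilp hAB hAB (Commute.refl B) hN 0 τ
  simpa [hB] using this

theorem compat_of_nilp {z x : CX k n} (hzx : ∀ i j, Commute (z.1 i) (x.1 j))
    (hN : ∀ i, IsNilpotent (x.1 i - z.1 i)) : Compat z x := by
  refine ⟨hzx, fun s i => ?_⟩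
  rw [det_lin_one (hzx i i) (hN i) (x.2.2 i)]
  exact Complex.one_mem_slitPlane

theorem compat_nuPt [NeZero n] {z x x0 : CX k n} (h : Compat z x)
    (hN : ∀ i, IsNilpotent (x.1 i - z.1 i)) (hx0 : Compat x x0)
    (hz0 : ∀ i j, Commute (z.1 i) (x0.1 j)) (τ : I) : Compat (nuPt τ z x h) x0 := by
  have e : ∀ i, (nuPt τ z x h).1 i = lin τ (z.1 i) (x.1 i) := fun i =>
    nu_of_det (det_lin_one (h.1 i i) (hN i) (x.2.2 i) τ)
  refine ⟨fun i j => ?_, fun s i => ?_⟩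
  · rw [e]; exact lin_commute _ (hz0 i j) (hx0.1 i j)
  · rw [e, det_lin_nilp (h.1 i i) (hz0 i i) (hx0.1 i i) (hN i)]
    exact hx0.2 s i

theorem triangle [NeZero n] {z x x0 : CX k n} (h : Compat z x)
    (hN : ∀ i, IsNilpotent (x.1 i - z.1 i)) (hx0 : Compat x x0)
    (hz0 : ∀ i j, Commute (z.1 i) (x0.1 j)) :
    ∃ hzx0 : Compat z x0, ((nuPath z x h).trans (nuPath x x0 hx0)).Homotopic (nuPath z x0 hzx0) := by
  have hc := compat_nuPt h hN hx0 hz0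
  have hzx0 : Compat z x0 := by have := hc 0; rwa [nuPt_zero] at this
  refine ⟨hzx0, ?_⟩
  have := nu_square (nuPath z x h) (Path.refl x0) hc hzx0 hx0
  rw [← Path.Homotopic.Quotient.eq] at this ⊢
  rw [this]; simp

theorem tdiag_nuPt [NeZero n] {x y : CX k n} (hc : Compat x y) {h : (Mat n)ˣ} (hx : TDiag h x)
    (hy : TDiag h y) (s : I) : TDiag h (nuPt s x y hc) := by
  intro i
  have e1 := hx i
  have e2 := hy i
  unfold DiagIn at *
  simp only [nuPt, nu, lin, mul_smul_comm, smul_mul_assoc, mul_add, add_mul]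
  exact ((e1.smul _).add (e2.smul _)).smul _

theorem exists_ss (x : CX k n) : ∃ (z : CX k n) (h : (Mat n)ˣ), TDiag h z ∧
    (∀ i j, Commute (z.1 i) (x.1 j)) ∧ ∀ i, IsNilpotent (x.1 i - z.1 i) := by
  obtain ⟨z, h, h1, h2, h3, h4⟩ := exists_jc x.1 x.2.1
  refine ⟨⟨z, h2, fun i => ?_⟩, h, h1, fun i j => (h3 j i).symm, h4⟩
  have := det_lin_one (h3 i i).symm (h4 i) (x.2.2 i) 0
  simpa using this

/-- good paths -/
def Good [NeZero n] (x : CX k n) (p : Path (base k n) x) : Prop :=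
  ∃ (z : CX k n) (h : (Mat n)ˣ) (q : Path (base k n) z) (hc : Compat z x),
    (∀ i, IsNilpotent (x.1 i - z.1 i)) ∧ (∀ t, TDiag h (q t)) ∧ p.Homotopic (q.trans (nuPath z x hc))

theorem tdiag_trans {a b c : CX k n} {h : (Mat n)ˣ} {p : Path a b} {q : Path b c}
    (hp : ∀ t, TDiag h (p t)) (hq : ∀ t, TDiag h (q t)) (t : I) : TDiag h ((p.trans q) t) := by
  rw [Path.trans_apply]
  split_ifs
  · exact hp _
  · exact hq _

theorem step [NeZero n] {x y x0 y0 : CX k n} (γ : Path x y) (b : Path x0 y0) (v : I → (Mat n)ˣ)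
    (hv : Continuous v) (hv0 : v 0 = 1) (hb : ∀ t, b t = conj (v t) x0) (g : (Mat n)ˣ)
    (hx0 : TDiag g x0) (hcompat : ∀ t, Compat (γ t) (b t))
    (hcx : ∀ A, (∀ i, Commute A (x.1 i)) → ∀ j, Commute A (x0.1 j))
    (hcy : ∀ A, (∀ i, Commute A (y.1 i)) → ∀ j, Commute A (y0.1 j))
    (p : Path (base k n) x) (hp : Good x p) : Good y (p.trans γ) := by
  obtain ⟨z, h, q, hzx, hN, hq, hpq⟩ := hp
  obtain ⟨w, hw, hwd, hwy, hwN⟩ := exists_ss y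
  have cx : Compat x x0 := by have := hcompat 0; simpa using this
  have cy : Compat y y0 := by have := hcompat 1; simpa using this
  have hwyc := compat_of_nilp hwy hwN
  obtain ⟨cz, T1⟩ := triangle hzx hN cx (fun i j => hcx _ (fun l => hzx.1 i l) j)
  obtain ⟨cw, T2⟩ := triangle hwyc hwN cy (fun i j => hcy _ (fun l => hwy i l) j)
  have S := nu_square γ b hcompat cx cy
  have hzd : TDiag h z := by have := hq 1; simpa using this
  obtain ⟨h', hd1, hd2⟩ := exists_simul_diag_two z.1 x0.1 h g hzd hx0 z.2.1 x0.2.1 cz.1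
  obtain ⟨q', hqq', hq'⟩ := change_basis q hq hd1
  let q1 := q'.trans (nuPath z x0 cz)
  have hq1 : ∀ t, TDiag h' (q1 t) := tdiag_trans hq' (fun t => tdiag_nuPt cz hd1 hd2 t)
  obtain ⟨q2, hq12, hq2⟩ := slide q1 v hv hv0 b hb
  have hq2d : ∀ t, TDiag (v 1 * h') (q2 t) := fun t => by rw [hq2]; exact (hq1 t).conj _
  have hy0 : TDiag (v 1 * h') y0 := by have := hq2d 1; simpa using this
  obtain ⟨h'', he1, he2⟩ := exists_simul_diag_two w.1 y0.1 hw (v 1 * h') hwd hy0 w.2.1 y0.2.1 cw.1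
  obtain ⟨q3, hq23, hq3⟩ := change_basis q2 hq2d he2
  refine ⟨w, h'', q3.trans (nuPath w y0 cw).symm, hwyc, hwN,
    tdiag_trans hq3 (fun t => tdiag_nuPt cw he1 he2 _), ?_⟩
  rw [← Path.Homotopic.Quotient.eq] at *
  simp only [Path.Homotopic.Quotient.mk_trans, Path.Homotopic.Quotient.mk_symm, q1] at *
  rw [← hq23, ← hq12, ← hqq', ← T1, ← T2, hpq]
  have S' : (Path.Homotopic.Quotient.mk γ) = ((Path.Homotopic.Quotient.mk (nuPath x x0 cx)).trans
      (Path.Homotopic.Quotient.mk b)).trans (Path.Homotopic.Quotient.mk (nuPath y y0 cy)).symm := by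
    rw [← S]; simp [Path.Homotopic.Quotient.trans_assoc]
  rw [S', Path.Homotopic.Quotient.trans_assoc _ _ (Path.Homotopic.Quotient.mk (nuPath w y hwyc)), quot_cancel]
  simp only [Path.Homotopic.Quotient.trans_assoc]

end Nu


section AbstractSlice

open Topology

theorem abstract_slice {R : Type*} [NormedRing R] [NormedAlgebra ℂ R] [FiniteDimensional ℂ R]
    (off : R →L[ℂ] R) (a0 : R) (h0 : off a0 = 0)
    (hinj : ∀ m, a0 * off m - off m * a0 - (m - off m) = 0 → m = 0) :
    ∃ (m : R → R) (U : Set R), U ∈ 𝓝 a0 ∧ ContinuousOn m U ∧ m a0 = a0 ∧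
      ∀ a ∈ U, a * (1 + off (m a)) = (1 + off (m a)) * (m a - off (m a)) ∧
        ∀ y, (m a - off (m a)) * off y - off y * (m a - off (m a)) - (y - off y) = 0 → y = 0 := by
  have : CompleteSpace R := FiniteDimensional.complete ℂ R
  let T : R → R →L[ℂ] R := fun c =>
    (ContinuousLinearMap.mul ℂ R c).comp off - ((ContinuousLinearMap.mul ℂ R).flip c).comp off
      - (ContinuousLinearMap.id ℂ R - off)
  have hT : ∀ c y, T c y = c * off y - off y * c - (y - off y) := fun c y => rfl
  have hTc : Continuous T := by
    simp only [T]
    fun_prop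
  have hTinj : ∀ c, (∀ y, T c y = 0 → y = 0) → Function.Injective (T c) := by
    intro c hc
    exact (injective_iff_map_eq_zero (T c)).mpr hc
  let T0 : R ≃L[ℂ] R := (LinearEquiv.ofInjectiveEndo (T a0 : R →ₗ[ℂ] R)
    (hTinj a0 (fun y hy => hinj y hy))).toContinuousLinearEquiv
  have hT0 : (T0 : R →L[ℂ] R) = T a0 := by ext y; rfl
  let F : R × R → R × R := fun p => (p.1, p.1 * (1 + off p.2) - (1 + off p.2) * (p.2 - off p.2))
  have hFc : ContDiff ℂ 1 F := by
    simp only [F]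
    fun_prop
  let L : R × R →L[ℂ] R × R := (ContinuousLinearMap.fst ℂ R R).prod
    (ContinuousLinearMap.fst ℂ R R + (T a0).comp (ContinuousLinearMap.snd ℂ R R))
  have hL : HasFDerivAt F L (a0, a0) := by
    have e1 : HasFDerivAt (fun p : R × R => p.1) (ContinuousLinearMap.fst ℂ R R) (a0, a0) :=
      hasFDerivAt_fst
    have e2 : HasFDerivAt (fun p : R × R => p.2) (ContinuousLinearMap.snd ℂ R R) (a0, a0) :=
      hasFDerivAt_snd
    have e3 : HasFDerivAt (fun p : R × R => off p.2) (off.comp (ContinuousLinearMap.snd ℂ R R)) (a0, a0) :=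
      (off.hasFDerivAt).comp _ e2
    have e4 := (e3.const_add 1)
    have e5 := (e1.mul' e4).sub (e4.mul' (e2.sub e3))
    refine (e1.prodMk e5).congr_fderiv ?_
    ext x <;> simp [L, hT, h0]
    abel
  have hLinj : Function.Injective L := by
    rw [injective_iff_map_eq_zero]
    rintro ⟨x, y⟩ hxy
    have h1 : x = 0 := congrArg Prod.fst hxy
    have h2 : x + T a0 y = 0 := congrArg Prod.snd hxy
    rw [h1, zero_add] at h2
    rw [h1, hinj y h2]; rfl
  let L0 : (R × R) ≃L[ℂ] (R × R) := (LinearEquiv.ofInjectiveEndo (L : R × R →ₗ[ℂ] R × R)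
    hLinj).toContinuousLinearEquiv
  have hL0 : (L0 : R × R →L[ℂ] R × R) = L := by ext y <;> rfl
  have hL' : HasFDerivAt F (L0 : R × R →L[ℂ] R × R) (a0, a0) := by rw [hL0]; exact hL
  let e := hFc.contDiffAt.toOpenPartialHomeomorph F hL' one_ne_zero
  have he : ∀ p, e p = F p := fun p => rfl
  have hsrc : (a0, a0) ∈ e.source := hFc.contDiffAt.mem_toOpenPartialHomeomorph_source hL' one_ne_zero
  have hF0 : F (a0, a0) = (a0, 0) := by simp [F, h0]
  have htgt : (a0, 0) ∈ e.target := by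
    rw [← hF0, ← he]; exact e.map_source hsrc
  let m : R → R := fun a => (e.symm (a, 0)).2
  have hm0 : m a0 = a0 := by
    have : e.symm (a0, 0) = (a0, a0) := by
      rw [← hF0, ← he]; exact e.left_inv hsrc
    simp only [m, this]
  let V : Set R := (fun a => ((a, 0) : R × R)) ⁻¹' e.target
  have hVo : IsOpen V := e.open_target.preimage (by fun_prop)
  have hmV : ContinuousOn m V := by
    apply continuous_snd.comp_continuousOn
    exact e.symm.continuousOn.comp (by fun_prop) (fun a ha => ha)
  have hm1 : ∀ a ∈ V, a * (1 + off (m a)) = (1 + off (m a)) * (m a - off (m a)) := by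
    intro a ha
    have h1 := e.right_inv ha
    rw [he] at h1
    have h2 : (e.symm (a, 0)).1 = a := congrArg Prod.fst h1
    have h3 := congrArg Prod.snd h1
    simp only [F, h2] at h3
    exact sub_eq_zero.mp h3
  have hcont : ContinuousAt (fun a => T (m a - off (m a))) a0 := by
    have : ContinuousAt m a0 := hmV.continuousAt (hVo.mem_nhds htgt)
    exact hTc.continuousAt.comp (this.sub (off.continuous.continuousAt.comp this))
  have hnh : Set.range ((↑) : (R ≃L[ℂ] R) → R →L[ℂ] R) ∈ 𝓝 (T a0) := by
    rw [← hT0]; exact ContinuousLinearEquiv.nhds T0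
  have hev : ∀ᶠ a in 𝓝 a0, T (m a - off (m a)) ∈ Set.range ((↑) : (R ≃L[ℂ] R) → R →L[ℂ] R) := by
    apply hcont
    simpa [hm0, h0] using hnh
  refine ⟨m, V ∩ {a | T (m a - off (m a)) ∈ Set.range ((↑) : (R ≃L[ℂ] R) → R →L[ℂ] R)},
    Filter.inter_mem (hVo.mem_nhds htgt) hev, hmV.mono Set.inter_subset_left, hm0, ?_⟩
  rintro a ⟨ha, e', he'⟩
  refine ⟨hm1 a ha, fun y hy => ?_⟩
  rw [← hT, ← he'] at hy
  exact (map_eq_zero_iff e' e'.injective).mp hy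

end AbstractSlice

section Slice

open unitInterval Topology Matrix

variable {n k : ℕ}

/-- off-block part -/
noncomputable def offL (μ : Fin n → ℂ) : Mat n →ₗ[ℂ] Mat n where
  toFun m := Matrix.of fun p q => if μ p = μ q then 0 else m p q
  map_add' a b := by ext p q; simp only [Matrix.of_apply, Matrix.add_apply]; split_ifs <;> simp
  map_smul' a b := by ext p q; simp

theorem offL_apply (μ : Fin n → ℂ) (m : Mat n) (p q : Fin n) :
    offL μ m p q = if μ p = μ q then 0 else m p q := rfl

theorem offL_offL (μ : Fin n → ℂ) (m : Mat n) : offL μ (offL μ m) = offL μ m := by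
  ext p q; simp only [offL_apply]; split_ifs <;> simp

theorem offL_eq_zero_iff (μ : Fin n → ℂ) (m : Mat n) :
    offL μ m = 0 ↔ ∀ p q, μ p ≠ μ q → m p q = 0 := by
  constructor
  · intro h p q hpq
    have := congrFun (congrFun h p) q
    rw [offL_apply, if_neg hpq] at this
    exact this
  · intro h
    ext p q
    rw [offL_apply]
    split_ifs with h1
    · rfl
    · exact h p q h1

theorem offL_mul_left (μ : Fin n → ℂ) {c : Mat n} (hc : offL μ c = 0) (B : Mat n) :
    offL μ (c * B) = c * offL μ B := by
  rw [offL_eq_zero_iff] at hc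
  ext p q
  rw [offL_apply, Matrix.mul_apply, Matrix.mul_apply]
  split_ifs with h
  · symm
    apply Finset.sum_eq_zero
    intro r _
    rw [offL_apply]
    by_cases h1 : μ p = μ r
    · rw [if_pos (h1.symm.trans h), mul_zero]
    · rw [hc p r h1, zero_mul]
  · apply Finset.sum_congr rfl
    intro r _
    rw [offL_apply]
    by_cases h1 : μ p = μ r
    · rw [if_neg (fun h2 => h (h1.trans h2))]
    · rw [hc p r h1, zero_mul, zero_mul]

theorem offL_mul_right (μ : Fin n → ℂ) {c : Mat n} (hc : offL μ c = 0) (B : Mat n) :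
    offL μ (B * c) = offL μ B * c := by
  rw [offL_eq_zero_iff] at hc
  ext p q
  rw [offL_apply, Matrix.mul_apply, Matrix.mul_apply]
  split_ifs with h
  · symm
    apply Finset.sum_eq_zero
    intro r _
    rw [offL_apply]
    by_cases h1 : μ r = μ q
    · rw [if_pos (h.trans h1.symm), zero_mul]
    · rw [hc r q h1, mul_zero]
  · apply Finset.sum_congr rfl
    intro r _
    rw [offL_apply]
    by_cases h1 : μ r = μ q
    · rw [if_neg (fun h2 => h (h2.trans h1))]
    · rw [hc r q h1, mul_zero, mul_zero]

theorem offL_of_commute {μ : Fin n → ℂ} {c : Mat n} (h : Commute c (diagonal μ)) : offL μ c = 0 := by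
  rw [offL_eq_zero_iff]
  intro p q hpq
  have := congrFun (congrFun h.eq p) q
  rw [Matrix.mul_diagonal, Matrix.diagonal_mul] at this
  by_contra hne
  apply hpq
  rw [mul_comm] at this
  exact (mul_right_cancel₀ hne this).symm

theorem commute_of_offL {μ e : Fin n → ℂ} {c : Mat n} (h : offL μ c = 0)
    (he : ∀ p q, μ p = μ q → e p = e q) : Commute c (diagonal e) := by
  rw [offL_eq_zero_iff] at h
  change _ * _ = _ * _
  ext p q
  rw [Matrix.mul_diagonal, Matrix.diagonal_mul]
  by_cases h1 : μ p = μ q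
  · rw [he p q h1, mul_comm]
  · rw [h p q h1]; simp

theorem TT_injective {μ : Fin n → ℂ} {a : Mat n} (hc : Commute a (diagonal μ))
    (hN : IsNilpotent (a - diagonal μ)) (m : Mat n)
    (hm : a * offL μ m - offL μ m * a - (m - offL μ m) = 0) : m = 0 := by
  have ha := offL_of_commute hc
  have h1 := congrArg (offL μ) hm
  simp only [map_sub, offL_mul_left μ ha, offL_mul_right μ ha, offL_offL, sub_self, sub_zero,
    map_zero] at h1
  rw [h1, zero_sub, neg_eq_zero] at hm
  have hm' : offL μ m = m := (sub_eq_zero.mp hm).symm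
  rw [hm'] at h1
  let D : Module.End ℂ (Mat n) := LinearMap.mulLeft ℂ (diagonal μ) - LinearMap.mulRight ℂ (diagonal μ)
  let N : Mat n := a - diagonal μ
  let E : Module.End ℂ (Mat n) := LinearMap.mulRight ℂ N - LinearMap.mulLeft ℂ N
  have hE : IsNilpotent E := by
    apply Commute.isNilpotent_sub (LinearMap.commute_mulLeft_right N N).symm
    · obtain ⟨r, hr⟩ := hN
      exact ⟨r, by rw [LinearMap.pow_mulRight]; rw [hr]; simp⟩
    · obtain ⟨r, hr⟩ := hN
      exact ⟨r, by rw [LinearMap.pow_mulLeft]; rw [hr]; simp⟩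
  have hND : Commute (diagonal μ) N := (hc.sub_left (Commute.refl _)).symm
  have hDE : Commute D E := by
    change D * E = E * D
    ext1 X
    simp only [D, E, Module.End.mul_apply, LinearMap.sub_apply, LinearMap.mulLeft_apply,
      LinearMap.mulRight_apply]
    have e1 := hND.eq
    simp only [mul_sub, sub_mul, mul_assoc]
    rw [← mul_assoc (diagonal μ) N X, e1]
    simp only [mul_assoc]
    abel
  have hDm : D m = E m := by
    simp only [D, E, N, LinearMap.sub_apply, LinearMap.mulLeft_apply, LinearMap.mulRight_apply,
      mul_sub, sub_mul]
    have := sub_eq_zero.mp h1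
    rw [this]; abel
  have hpow : ∀ j, (D ^ j) m = (E ^ j) m := by
    intro j
    induction j with
    | zero => rfl
    | succ j ih =>
      rw [pow_succ, Module.End.mul_apply, hDm, ← Module.End.mul_apply, (hDE.pow_left j).eq,
        Module.End.mul_apply, ih, ← Module.End.mul_apply, ← pow_succ']
  have hDj : ∀ j p q, (D ^ j) m p q = (μ p - μ q) ^ j * m p q := by
    intro j
    induction j with
    | zero => intro p q; simp
    | succ j ih =>
      intro p q
      rw [pow_succ', Module.End.mul_apply]
      simp only [D, LinearMap.sub_apply, LinearMap.mulLeft_apply, LinearMap.mulRight_apply,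
        Matrix.sub_apply, Matrix.mul_diagonal, Matrix.diagonal_mul]
      have := ih p q
      simp only [D] at this
      rw [this]
      ring
  obtain ⟨r, hr⟩ := hE
  have hz : offL μ m = 0 := by
    rw [offL_eq_zero_iff]
    intro p q hpq
    have h2 := hDj r p q
    rw [hpow, hr] at h2
    simp only [LinearMap.zero_apply, Matrix.zero_apply] at h2
    rcases mul_eq_zero.mp h2.symm with h3 | h3
    · exact absurd (sub_eq_zero.mp (eq_zero_of_pow_eq_zero h3)) hpq
    · exact h3
  rw [← hm', hz]

section
attribute [local instance] Matrix.linftyOpNormedRing Matrix.linftyOpNormedAlgebra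

theorem slice_m {μ : Fin n → ℂ} {a0 : Mat n} (hc : Commute a0 (diagonal μ))
    (hN : IsNilpotent (a0 - diagonal μ)) :
    ∃ (m : Mat n → Mat n) (U : Set (Mat n)), U ∈ 𝓝 a0 ∧ ContinuousOn m U ∧ m a0 = a0 ∧
      ∀ a ∈ U, a * (1 + offL μ (m a)) = (1 + offL μ (m a)) * (m a - offL μ (m a)) ∧
        ∀ y, (m a - offL μ (m a)) * offL μ y - offL μ y * (m a - offL μ (m a)) - (y - offL μ y) = 0 → y = 0 :=
  abstract_slice (R := Mat n) (LinearMap.toContinuousLinearMap (offL μ)) a0 (offL_of_commute hc)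
    (fun m hm => TT_injective hc hN m hm)
end

theorem slice {μ : Fin n → ℂ} {a0 : Mat n} (hc : Commute a0 (diagonal μ))
    (hN : IsNilpotent (a0 - diagonal μ)) :
    ∃ (w : Mat n → Mat n) (U : Set (Mat n)), U ∈ 𝓝 a0 ∧ ContinuousOn w U ∧ w a0 = 1 ∧
      ∀ a ∈ U, (w a).det ≠ 0 ∧ ∀ A, Commute A a → ∀ e : Fin n → ℂ, (∀ p q, μ p = μ q → e p = e q) →
        Commute ((w a)⁻¹ * A * w a) (diagonal e) := by
  obtain ⟨m, U, hU, hm, hm0, H⟩ := slice_m hc hN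
  have hcont : Continuous (offL μ) := LinearMap.continuous_of_finiteDimensional _
  have hw : ContinuousOn (fun a => 1 + offL μ (m a)) U :=
    continuousOn_const.add (hcont.comp_continuousOn hm)
  have hw0 : 1 + offL μ (m a0) = 1 := by rw [hm0, offL_of_commute hc, add_zero]
  have hdet : ∀ᶠ a in 𝓝 a0, (1 + offL μ (m a)).det ≠ 0 := by
    have h1 : ContinuousAt (fun a => (1 + offL μ (m a)).det) a0 :=
      (Continuous.matrix_det continuous_id).continuousAt.comp (hw.continuousAt hU)
    apply h1.eventually_ne
    rw [hw0, det_one]; exact one_ne_zero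
  refine ⟨fun a => 1 + offL μ (m a), U ∩ {a | (1 + offL μ (m a)).det ≠ 0}, Filter.inter_mem hU hdet,
    hw.mono Set.inter_subset_left, hw0, ?_⟩
  rintro a ⟨ha, hd⟩
  refine ⟨hd, fun A hA e he => ?_⟩
  obtain ⟨H1, H2⟩ := H a ha
  set W : Mat n := 1 + offL μ (m a) with hW
  set c : Mat n := m a - offL μ (m a) with hcdef
  have hu : IsUnit W.det := isUnit_iff_ne_zero.mpr hd
  have hoc : offL μ c = 0 := by rw [hcdef, map_sub, offL_offL, sub_self]
  have hcW : c = W⁻¹ * a * W := by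
    rw [mul_assoc, H1, ← mul_assoc, W.nonsing_inv_mul hu, one_mul]
  have hBc : Commute (W⁻¹ * A * W) c := by
    rw [hcW]
    change _ * _ = _ * _
    have h1 : W⁻¹ * A * W * (W⁻¹ * a * W) = W⁻¹ * (A * a) * W := by
      simp only [mul_assoc, Matrix.mul_nonsing_inv_cancel_left _ _ hu]
    have h2 : W⁻¹ * a * W * (W⁻¹ * A * W) = W⁻¹ * (a * A) * W := by
      simp only [mul_assoc, Matrix.mul_nonsing_inv_cancel_left _ _ hu]
    rw [h1, h2, hA.eq]
  set B := W⁻¹ * A * W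
  apply commute_of_offL _ he
  apply H2
  rw [offL_offL, sub_self, sub_zero, ← offL_mul_left μ hoc, ← offL_mul_right μ hoc, hBc.eq, sub_self]

end Slice


section Loc

open unitInterval Topology Matrix

variable {n k : ℕ}

theorem isNilpotent_sum_smul {ι : Type*} (s : Finset ι) (N : ι → Mat n) (c : ι → ℂ)
    (hN : ∀ i, IsNilpotent (N i)) (hc : ∀ i j, Commute (N i) (N j)) :
    IsNilpotent (∑ i ∈ s, c i • N i) := by
  classical
  induction s using Finset.induction_on with
  | empty => simp
  | insert a s ha ih =>
    rw [Finset.sum_insert ha]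
    apply Commute.isNilpotent_add _ ((hN a).smul _) ih
    exact Commute.sum_right _ _ _ fun j _ => ((hc a j).smul_left _).smul_right _

theorem exists_sep {ι : Type*} [Fintype ι] (χ : Fin n → ι → ℂ) :
    ∃ c : ι → ℂ, ∀ p q, ∑ i, c i * χ p i = ∑ i, c i * χ q i → χ p = χ q := by
  classical
  obtain ⟨f, hf⟩ := Module.exists_dual_forall_apply_ne_zero (K := ℂ) (M := ι → ℂ)
    (fun pq : {pq : Fin n × Fin n // χ pq.1 ≠ χ pq.2} => χ pq.1.1 - χ pq.1.2)
    (fun pq => sub_ne_zero.mpr pq.2)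
  refine ⟨fun i => f (Pi.single i 1), fun p q h => ?_⟩
  by_contra hne
  apply hf ⟨(p, q), hne⟩
  rw [map_sub, sub_eq_zero]
  have e : ∀ x : ι → ℂ, f x = ∑ i, f (Pi.single i 1) * x i := by
    intro x
    rw [LinearMap.pi_apply_eq_sum_univ f x]
    simp only [smul_eq_mul, mul_comm]
    refine Finset.sum_congr rfl fun i _ => ?_
    congr 2
    funext j
    simp [Pi.single_apply, eq_comm]
  rw [e, e]; exact h

theorem loc [NeZero n] (A0 : CX k n) : ∃ U ∈ 𝓝 A0, ∃ (z0 : CX k n) (g : (Mat n)ˣ), TDiag g z0 ∧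
    ∃ u : CX k n → (Mat n)ˣ, ContinuousOn u U ∧ ∀ x ∈ U, Compat x (conj (u x) z0) ∧
      ∀ A, (∀ i, Commute A (x.1 i)) → ∀ j, Commute A ((conj (u x) z0).1 j) := by
  obtain ⟨z0, h0, hz0, hcz, hNz⟩ := exists_ss A0
  choose d hd using fun i => (hz0 i).exists_eq
  obtain ⟨c, hc⟩ := exists_sep (fun p i => d i p)
  let μ : Fin n → ℂ := fun p => ∑ i, c i * d i p
  let H : Mat n := (h0 : Mat n)
  let H' : Mat n := ((h0⁻¹ : (Mat n)ˣ) : Mat n)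
  have hHH : H * H' = 1 := Units.mul_inv h0
  have hHH' : H' * H = 1 := Units.inv_mul h0
  let a : CX k n → Mat n := fun x => ∑ i, c i • (H' * x.1 i * H)
  have ha : Continuous a := by
    apply continuous_finsetSum
    intro i _
    have h3 : Continuous fun x : CX k n => x.1 i := (continuous_apply i).comp continuous_subtype_val
    exact ((continuous_const.mul h3).mul continuous_const).const_smul (c i)
  have hcj : ∀ X Y : Mat n, Commute X Y → Commute (H' * X * H) (H' * Y * H) := by
    intro X Y h
    change _ * _ = _ * _
    have e : ∀ X Y, H' * X * H * (H' * Y * H) = H' * (X * Y) * H := by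
      intro X Y
      calc _ = H' * X * (H * H') * Y * H := by noncomm_ring
        _ = _ := by rw [hHH]; noncomm_ring
    rw [e, e, h.eq]
  have hdi : ∀ i, H' * z0.1 i * H = diagonal (d i) := by
    intro i
    rw [hd i]
    calc _ = (H' * H) * diagonal (d i) * (H' * H) := by simp only [H, H']; noncomm_ring
      _ = _ := by rw [hHH']; simp
  have hdμ : diagonal μ = ∑ i, c i • diagonal (d i) := by
    ext p q
    rw [Matrix.sum_apply]
    by_cases hpq : p = q
    · subst hpq; simp [μ]
    · simp [Matrix.diagonal_apply_ne _ hpq]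
  have hcomm : Commute (a A0) (diagonal μ) := by
    rw [hdμ]
    refine Commute.sum_left _ _ _ fun i _ => Commute.sum_right _ _ _ fun j _ => ?_
    rw [← hdi j]
    exact ((hcj _ _ (hcz j i).symm).smul_left _).smul_right _
  have hnil : IsNilpotent (a A0 - diagonal μ) := by
    have e : a A0 - diagonal μ = ∑ i, c i • (H' * (A0.1 i - z0.1 i) * H) := by
      rw [hdμ, ← Finset.sum_sub_distrib]
      refine Finset.sum_congr rfl fun i _ => ?_
      rw [← hdi i, mul_sub, sub_mul, smul_sub]
    rw [e]
    apply isNilpotent_sum_smul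
    · intro i
      obtain ⟨r, hr⟩ := hNz i
      refine ⟨r, ?_⟩
      have := Units.conj_pow' h0 (A0.1 i - z0.1 i) r
      change (H' * (A0.1 i - z0.1 i) * H) ^ r = _ at this
      rw [this, hr]; simp
    · intro i j
      apply hcj
      apply Commute.sub_left
      · exact (A0.2.1 i j).sub_right (hcz j i).symm
      · exact (hcz i j).sub_right (z0.2.1 i j)
  obtain ⟨w, U, hU, hw, hw0, hW⟩ := slice hcomm hnil
  have hUx : a ⁻¹' U ∈ 𝓝 A0 := ha.continuousAt hU
  let wx : CX k n → Mat n := fun x => H * w (a x) * H'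
  have hwdet : ∀ x ∈ a ⁻¹' U, (wx x).det ≠ 0 := by
    intro x hx
    simp only [wx, H, H', det_units_conj]
    exact (hW _ hx).1
  classical
  let u : CX k n → (Mat n)ˣ := fun x => if hx : (wx x).det ≠ 0 then toU (wx x) hx else 1
  have hux : ∀ x ∈ a ⁻¹' U, ((u x : (Mat n)ˣ) : Mat n) = wx x := by
    intro x hx
    simp only [u, dif_pos (hwdet x hx)]
    rfl
  have hwxc : ContinuousOn wx (a ⁻¹' U) :=
    (continuousOn_const.mul (hw.comp ha.continuousOn fun x hx => hx)).mul continuousOn_const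
  have huc : ContinuousOn u (a ⁻¹' U) := by
    rw [continuousOn_iff_continuous_domRestrict]
    have := continuous_toU (fun y : (a ⁻¹' U : Set (CX k n)) => wx y.1)
      (continuousOn_iff_continuous_domRestrict.mp hwxc) (fun y => hwdet y.1 y.2)
    convert this using 1
    funext y
    simp only [u, Set.domRestrict_apply, dif_pos (hwdet y.1 y.2)]
  have hu0 : u A0 = 1 := by
    ext1
    rw [hux A0 (mem_of_mem_nhds hUx)]
    simp only [wx, hw0, mul_one, hHH, Units.val_one]
  have hcent : ∀ x ∈ a ⁻¹' U, ∀ A, (∀ i, Commute A (x.1 i)) → ∀ j, Commute A ((conj (u x) z0).1 j) := by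
    intro x hx A hA j
    have h1 : Commute (H' * A * H) (a x) :=
      Commute.sum_right _ _ _ fun i _ => (hcj _ _ (hA i)).smul_right _
    have h2 := (hW _ hx).2 _ h1 (d j) (fun p q hpq => congrFun (hc p q hpq) j)
    have hdw : IsUnit (w (a x)).det := isUnit_iff_ne_zero.mpr (hW _ hx).1
    have hinv : (((u x)⁻¹ : (Mat n)ˣ) : Mat n) = H * (w (a x))⁻¹ * H' := by
      rw [Matrix.coe_units_inv, hux x hx]
      apply Matrix.inv_eq_left_inv
      simp only [wx]
      calc _ = H * (w (a x))⁻¹ * (H' * H) * w (a x) * H' := by noncomm_ring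
        _ = H * ((w (a x))⁻¹ * w (a x)) * H' := by rw [hHH']; noncomm_ring
        _ = 1 := by rw [Matrix.nonsing_inv_mul _ hdw, mul_one, hHH]
    have hz : (conj (u x) z0).1 j = H * w (a x) * diagonal (d j) * (w (a x))⁻¹ * H' := by
      simp only [conj]
      rw [hinv, hux x hx, ← hdi j]
      simp only [wx]
      noncomm_ring
    rw [hz]
    set w' := w (a x)
    have hww : w' * w'⁻¹ = 1 := Matrix.mul_nonsing_inv _ hdw
    have hww' : w'⁻¹ * w' = 1 := Matrix.nonsing_inv_mul _ hdw
    change _ * _ = _ * _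
    have h3 := congrArg (fun X => H * w' * X * w'⁻¹ * H') h2.eq
    calc A * (H * w' * diagonal (d j) * w'⁻¹ * H')
        = (H * H') * A * (H * w' * diagonal (d j) * w'⁻¹ * H') := by rw [hHH, one_mul]
      _ = H * 1 * H' * A * (H * w' * diagonal (d j) * w'⁻¹ * H') := by rw [mul_one]
      _ = H * w' * (w'⁻¹ * (H' * A * H) * w' * diagonal (d j)) * w'⁻¹ * H' := by
          rw [← hww]; noncomm_ring
      _ = H * w' * (diagonal (d j) * (w'⁻¹ * (H' * A * H) * w')) * w'⁻¹ * H' := h3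
      _ = (H * w' * diagonal (d j) * w'⁻¹ * H') * A * (H * (w' * w'⁻¹) * H') := by noncomm_ring
      _ = _ := by rw [hww, mul_one, hHH, mul_one]
  have hslit : ∀ᶠ x in 𝓝 A0, ∀ (s : I) i, (lin s (x.1 i) ((conj (u x) z0).1 i)).det ∈ Complex.slitPlane := by
    have hcu : ContinuousAt u A0 := huc.continuousAt hUx
    have key : ∀ s : I, ∀ᶠ p : CX k n × I in 𝓝 A0 ×ˢ 𝓝 s,
        ∀ i, (lin p.2 (p.1.1 i) ((conj (u p.1) z0).1 i)).det ∈ Complex.slitPlane := by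
      intro s
      rw [Filter.eventually_all]
      intro i
      rw [← nhds_prod_eq]
      have hu1 : ContinuousAt (fun p : CX k n × I => ((u p.1 : (Mat n)ˣ) : Mat n)) (A0, s) :=
        Units.continuous_val.continuousAt.comp (ContinuousAt.comp (f := Prod.fst) (x := (A0, s)) hcu continuousAt_fst)
      have hu2 : ContinuousAt (fun p : CX k n × I => (((u p.1)⁻¹ : (Mat n)ˣ) : Mat n)) (A0, s) :=
        Units.continuous_coe_inv.continuousAt.comp (ContinuousAt.comp (f := Prod.fst) (x := (A0, s)) hcu continuousAt_fst)
      have h3 : Continuous fun p : CX k n × I => p.1.1 i :=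
        (continuous_apply i).comp (continuous_subtype_val.comp continuous_fst)
      have h4 : Continuous fun p : CX k n × I => ((p.2 : ℝ) : ℂ) := by fun_prop
      have hcont : ContinuousAt (fun p : CX k n × I =>
          (lin p.2 (p.1.1 i) ((conj (u p.1) z0).1 i)).det) (A0, s) := by
        apply (Continuous.matrix_det continuous_id).continuousAt.comp
        exact ((continuousAt_const.sub h4.continuousAt).smul h3.continuousAt).add
          (h4.continuousAt.smul ((hu1.mul continuousAt_const).mul hu2))
      apply hcont
      apply Complex.isOpen_slitPlane.mem_nhds
      change (lin s (A0.1 i) ((conj (u A0) z0).1 i)).det ∈ _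
      rw [hu0, conj_one]
      have := det_lin_one (hcz i i).symm (by rw [← neg_sub]; exact (hNz i).neg) (z0.2.2 i) s
      rw [this]; exact Complex.one_mem_slitPlane
    have := isCompact_univ.eventually_forall_of_forall_eventually (x₀ := A0) (K := (Set.univ : Set I))
      (P := fun x s => ∀ i, (lin s (x.1 i) ((conj (u x) z0).1 i)).det ∈ Complex.slitPlane)
      (fun s _ => by rw [nhds_prod_eq]; exact key s)
    filter_upwards [this] with x hx s i using hx s trivial i
  refine ⟨a ⁻¹' U ∩ {x | ∀ (s : I) i, (lin s (x.1 i) ((conj (u x) z0).1 i)).det ∈ Complex.slitPlane},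
    Filter.inter_mem hUx hslit, z0, h0, hz0, u, huc.mono Set.inter_subset_left, ?_⟩
  rintro x ⟨hx, hxs⟩
  have h1 := hcent x hx
  exact ⟨⟨fun i j => h1 _ (fun i' => x.2.1 i i') j, hxs⟩, h1⟩

theorem good_loc [NeZero n] (A0 : CX k n) : ∃ U ∈ 𝓝 A0, ∀ (x y : CX k n) (γ : Path x y),
    (∀ t, γ t ∈ U) → ∀ p : Path (base k n) x, Good x p → Good y (p.trans γ) := by
  obtain ⟨U, hU, z0, g, hg, u, hu, H⟩ := loc A0
  refine ⟨U, hU, fun x y γ hγ p hp => ?_⟩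
  have hx : x ∈ U := by have := hγ 0; simpa using this
  have hy : y ∈ U := by have := hγ 1; simpa using this
  have huγ : Continuous fun t => u (γ t) := hu.comp_continuous γ.continuous hγ
  let b : Path (conj (u x) z0) (conj (u y) z0) :=
    { toFun := fun t => conj (u (γ t)) z0
      continuous_toFun := continuous_conj huγ continuous_const
      source' := by simp
      target' := by simp }
  refine step γ b (fun t => u (γ t) * (u x)⁻¹) (huγ.mul continuous_const) (by simp) ?_ (u x * g)
    (hg.conj _) (fun t => (H _ (hγ t)).1) (H x hx).2 (H y hy).2 p hp
  intro t
  rw [← conj_mul, inv_mul_cancel_right]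
  rfl

end Loc

section Torus

open unitInterval Topology Matrix

variable {n k : ℕ}

/-- point of the torus in basis `h` -/
def dg (h : (Mat n)ˣ) (d : Fin k → Fin n → ℂ) (hd : ∀ i, ∏ a, d i a = 1) : CX k n :=
  ⟨fun i => (h : Mat n) * diagonal (d i) * ((h⁻¹ : (Mat n)ˣ) : Mat n), fun i j => by
    change _ * _ = _ * _
    have e : ∀ i j, (h : Mat n) * diagonal (d i) * ((h⁻¹ : (Mat n)ˣ) : Mat n) *
      ((h : Mat n) * diagonal (d j) * ((h⁻¹ : (Mat n)ˣ) : Mat n)) =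
      (h : Mat n) * diagonal (fun a => d i a * d j a) * ((h⁻¹ : (Mat n)ˣ) : Mat n) := by
      intro i j
      rw [← diagonal_mul_diagonal]
      simp only [mul_assoc, Units.inv_mul_cancel_left]
    rw [e, e]
    simp only [mul_comm], fun i => by
    rw [det_units_conj, det_diagonal]
    exact hd i⟩

theorem continuous_dg {Y : Type*} [TopologicalSpace Y] (h : (Mat n)ˣ) {d : Y → Fin k → Fin n → ℂ}
    (hc : Continuous d) (hd : ∀ y i, ∏ a, d y i a = 1) : Continuous fun y => dg h (d y) (hd y) := by
  apply Continuous.subtype_mk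
  apply continuous_pi
  intro i
  have h1 : Continuous fun y => d y i := (continuous_apply i).comp hc
  exact (continuous_const.mul h1.matrix_diagonal).mul continuous_const

theorem tdiag_dg (h : (Mat n)ˣ) (d : Fin k → Fin n → ℂ) (hd) : TDiag h (dg h d hd) :=
  fun i => diagIn_of_eq h (d i)

theorem dg_one (h : (Mat n)ˣ) (hd) : dg (k := k) h 1 hd = base k n := by
  apply Subtype.ext; funext i
  change (h : Mat n) * diagonal (1 : Fin n → ℂ) * ((h⁻¹ : (Mat n)ˣ) : Mat n) = 1
  rw [diagonal_one', mul_one, Units.mul_inv]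

theorem dg_congr (h : (Mat n)ˣ) {d d' : Fin k → Fin n → ℂ} (e : d = d') (hd hd') :
    dg h d hd = dg h d' hd' := by subst e; rfl

/-- diagonal coordinates -/
def coo (h : (Mat n)ˣ) (z : CX k n) : Fin k → Fin n → ℂ :=
  fun i a => (((h⁻¹ : (Mat n)ˣ) : Mat n) * z.1 i * (h : Mat n)) a a

theorem continuous_coo (h : (Mat n)ˣ) : Continuous (coo (k := k) h) := by
  apply continuous_pi
  intro i
  apply continuous_pi
  intro a
  have h3 : Continuous fun x : CX k n => x.1 i := (continuous_apply i).comp continuous_subtype_val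
  exact ((continuous_const.mul h3).mul continuous_const).matrix_elem a a

theorem coo_base (h : (Mat n)ˣ) : coo h (base k n) = 1 := by
  funext i a
  change (((h⁻¹ : (Mat n)ˣ) : Mat n) * 1 * (h : Mat n)) a a = 1
  simp

theorem coo_eq {h : (Mat n)ˣ} {z : CX k n} (H : TDiag h z) (i : Fin k) :
    z.1 i = (h : Mat n) * diagonal (coo h z i) * ((h⁻¹ : (Mat n)ˣ) : Mat n) := by
  have : diagonal (coo h z i) = (((h⁻¹ : (Mat n)ˣ) : Mat n) * z.1 i * (h : Mat n)) :=
    (H i).diagonal_diag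
  rw [this]
  simp [mul_assoc]

theorem coo_prod {h : (Mat n)ˣ} {z : CX k n} (H : TDiag h z) (i : Fin k) : ∏ a, coo h z i a = 1 := by
  have := z.2.2 i
  rw [coo_eq H i, det_units_conj, det_diagonal] at this
  exact this

theorem dg_coo {h : (Mat n)ˣ} {z : CX k n} (H : TDiag h z) : dg h (coo h z) (coo_prod H) = z := by
  apply Subtype.ext; funext i
  exact (coo_eq H i).symm

theorem exists_torus_path [NeZero n] {h : (Mat n)ˣ} {z : CX k n} (H : TDiag h z) :
    ∃ q : Path (base k n) z, ∀ t, TDiag h (q t) := by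
  let d := coo h z
  have hne : ∀ i a, d i a ≠ 0 := by
    intro i a h0
    have := coo_prod H i
    rw [Finset.prod_eq_zero (Finset.mem_univ a) h0] at this
    exact zero_ne_one this
  let δ : I → Fin k → Fin n → ℂ := fun t i a => Complex.exp ((t : ℝ) * Complex.log (d i a)) *
    (if a = 0 then ∏ b, (Complex.exp ((t : ℝ) * Complex.log (d i b)))⁻¹ else 1)
  have hδ : ∀ t i, ∏ a, δ t i a = 1 := by
    intro t i
    simp only [δ]
    rw [Finset.prod_mul_distrib, Finset.prod_ite_eq' Finset.univ (0 : Fin n), if_pos (Finset.mem_univ _),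
      ← Finset.prod_mul_distrib]
    exact Finset.prod_eq_one fun a _ => mul_inv_cancel₀ (Complex.exp_ne_zero _)
  have hδc : Continuous δ := by
    apply continuous_pi; intro i; apply continuous_pi; intro a
    have hb : ∀ b, Continuous fun t : I => Complex.exp (((t : ℝ) : ℂ) * Complex.log (d i b)) := by
      intro b; fun_prop
    simp only [δ]
    split_ifs
    · exact (hb a).mul (continuous_finsetProd _ fun b _ => (hb b).inv₀ fun t => Complex.exp_ne_zero _)
    · exact (hb a).mul continuous_const
  have h0 : δ 0 = 1 := by
    funext i a; simp [δ]
  have h1 : δ 1 = d := by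
    funext i a
    simp only [δ, Set.Icc.coe_one, Complex.ofReal_one, one_mul, Complex.exp_log (hne i _)]
    rw [Finset.prod_inv_distrib, show ∏ b, d i b = 1 from coo_prod H i]
    simp
  refine ⟨⟨⟨fun t => dg h (δ t) (hδ t), continuous_dg h hδc hδ⟩, ?_, ?_⟩, fun t => tdiag_dg h (δ t) (hδ t)⟩
  · exact (dg_congr h h0 (hδ 0) (by simp)).trans (dg_one h _)
  · exact (dg_congr h h1 (hδ 1) (coo_prod H)).trans (dg_coo H)

/-- torus loops in coordinates -/
structure IsTL (d : I → Fin k → Fin n → ℂ) : Prop where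
  cont : Continuous d
  prod : ∀ t i, ∏ a, d t i a = 1
  zero : d 0 = 1
  one : d 1 = 1

/-- the actual loop -/
def loopOf (h : (Mat n)ˣ) (d : I → Fin k → Fin n → ℂ) (hd : IsTL d) : Path (base k n) (base k n) where
  toFun t := dg h (d t) (hd.prod t)
  continuous_toFun := continuous_dg h hd.cont hd.prod
  source' := (dg_congr h hd.zero _ (by simp)).trans (dg_one h _)
  target' := (dg_congr h hd.one _ (by simp)).trans (dg_one h _)

/-- null torus loops -/
def NullL (h : (Mat n)ˣ) (d : I → Fin k → Fin n → ℂ) : Prop :=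
  ∃ hd : IsTL d, (loopOf h d hd).Homotopic (Path.refl _)

theorem NullL.one (h : (Mat n)ˣ) : NullL h (1 : I → Fin k → Fin n → ℂ) := by
  refine ⟨⟨continuous_const, fun t i => by simp, rfl, rfl⟩, ?_⟩
  have : loopOf h (1 : I → Fin k → Fin n → ℂ) ⟨continuous_const, fun t i => by simp, rfl, rfl⟩ =
      Path.refl (base k n) := by
    apply Path.ext; funext t
    exact dg_one h (fun i => by simp)
  rw [this]

theorem NullL.mul (h : (Mat n)ˣ) (α β : I → Fin k → Fin n → ℂ) (hα : NullL h α) (hβ : NullL h β) :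
    NullL h (α * β) := by
  obtain ⟨ha, na⟩ := hα
  obtain ⟨hb, nb⟩ := hβ
  have hp : ∀ s t i, ∏ a, (α s * β t) i a = 1 := by
    intro s t i
    simp only [Pi.mul_apply, Finset.prod_mul_distrib, ha.prod, hb.prod, one_mul]
  have hab : IsTL (α * β) := ⟨ha.cont.mul hb.cont, fun t i => hp t t i, by
    rw [Pi.mul_apply, ha.zero, hb.zero, one_mul], by rw [Pi.mul_apply, ha.one, hb.one, one_mul]⟩
  refine ⟨hab, ?_⟩
  have := diag_square (K := fun p : I × I => dg h (α p.1 * β p.2) (hp p.1 p.2))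
    (continuous_dg h ((ha.cont.comp continuous_fst).mul (hb.cont.comp continuous_snd)) _)
    (loopOf h α ha) (loopOf h β hb) (loopOf h (α * β) hab)
    (fun t => dg_congr h (by rw [hb.zero, mul_one]) (ha.prod t) (hp t 0))
    (fun t => dg_congr h (by rw [ha.one, one_mul]) (hb.prod t) (hp 1 t)) (fun t => rfl)
  rw [← Path.Homotopic.Quotient.eq] at *
  rw [this]
  simp [na, nb]

theorem perm_unit (π : Equiv.Perm (Fin n)) : ∃ P : (Mat n)ˣ, ∀ c : Fin n → ℂ,
    (P : Mat n) * diagonal c * ((P⁻¹ : (Mat n)ˣ) : Mat n) = diagonal (c ∘ π.symm) := by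
  let Q : Mat n := (π.symm).toPEquiv.toMatrix
  let Q' : Mat n := π.toPEquiv.toMatrix
  have hQQ : Q * Q' = 1 := by
    simp only [Q, Q']
    rw [← PEquiv.toMatrix_trans, ← Equiv.toPEquiv_trans]
    simp
  have hQQ' : Q' * Q = 1 := by
    simp only [Q, Q']
    rw [← PEquiv.toMatrix_trans, ← Equiv.toPEquiv_trans]
    simp
  have hcomm : ∀ c : Fin n → ℂ, Q * diagonal c = diagonal (c ∘ π.symm) * Q := by
    intro c
    ext a b
    rw [Matrix.mul_diagonal, Matrix.diagonal_mul]
    simp only [Q, PEquiv.toMatrix_apply, Equiv.toPEquiv_apply, Option.mem_def, Option.some.injEq]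
    split_ifs with hab
    · subst hab; simp
    · simp
  refine ⟨⟨Q, Q', hQQ, hQQ'⟩, fun c => ?_⟩
  change Q * diagonal c * Q' = _
  rw [hcomm, mul_assoc, hQQ, mul_one]

/-- a tuple with only one nontrivial entry -/
def sing (i : Fin k) (A : Mat n) (hA : A.det = 1) : CX k n :=
  ⟨Function.update (fun _ => 1) i A, fun j l => by
    by_cases hj : j = i
    · by_cases hl : l = i
      · subst hj; subst hl; exact Commute.refl _
      · rw [Function.update_of_ne hl]; exact Commute.one_right _
    · rw [Function.update_of_ne hj]; exact Commute.one_left _, fun j => by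
    by_cases hj : j = i
    · subst hj; rw [Function.update_self]; exact hA
    · rw [Function.update_of_ne hj]; exact det_one⟩

theorem sing_one (i : Fin k) {A : Mat n} (hA : A.det = 1) (h : A = 1) : sing i A hA = base k n := by
  subst h
  apply Subtype.ext
  exact Function.update_eq_self i _

/-- basic loops in coordinates -/
noncomputable def bas [NeZero n] (l : I → ℂ) (i : Fin k) (b : Fin n) : I → Fin k → Fin n → ℂ :=
  fun t j a => if j = i then (if a = b then l t else 1) * (if a = 0 then (l t)⁻¹ else 1) else 1

theorem bas_null [NeZero n] (h : (Mat n)ˣ) (l : I → ℂ) (hl : Continuous l) (hl0 : l 0 = 1) (hl1 : l 1 = 1)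
    (hne : ∀ t, l t ≠ 0) (i : Fin k) (b : Fin n) : NullL h (bas l i b) := by
  have hli : Continuous fun t => (l t)⁻¹ := hl.inv₀ hne
  have hd : IsTL (bas (k := k) l i b) := by
    refine ⟨?_, ?_, ?_, ?_⟩
    · apply continuous_pi; intro j; apply continuous_pi; intro a
      simp only [bas]
      split_ifs <;> fun_prop
    · intro t j
      simp only [bas]
      split_ifs
      · rw [Finset.prod_mul_distrib, Finset.prod_ite_eq' Finset.univ b,
          Finset.prod_ite_eq' Finset.univ (0 : Fin n)]
        simp [hne t]
      · simp
    · funext j a; simp [bas, hl0]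
    · funext j a; simp [bas, hl1]
  refine ⟨hd, ?_⟩
  obtain ⟨P, hP⟩ := perm_unit (Equiv.swap (0 : Fin n) b)
  obtain ⟨v, hv, hv0, hv1, -⟩ := exists_unit_path P
  let D : I → Mat n := fun t => diagonal fun a => if a = b then l t else 1
  let E : I → Mat n := fun t => diagonal fun a => if a = 0 then (l t)⁻¹ else 1
  have hDc : Continuous D := by
    apply Continuous.matrix_diagonal
    apply continuous_pi; intro a; split_ifs <;> fun_prop
  have hEc : Continuous E := by
    apply Continuous.matrix_diagonal
    apply continuous_pi; intro a; split_ifs <;> fun_prop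
  let K : I × I → Mat n := fun p => (h : Mat n) * (D p.2 * ((v p.1 : Mat n) * E p.2 *
    (((v p.1)⁻¹ : (Mat n)ˣ) : Mat n))) * ((h⁻¹ : (Mat n)ˣ) : Mat n)
  have hKc : Continuous K := by
    have h1 := (Units.continuous_iff.mp hv).1
    have h2 := (Units.continuous_iff.mp hv).2
    exact (continuous_const.mul ((hDc.comp continuous_snd).mul (((h1.comp continuous_fst).mul
      (hEc.comp continuous_snd)).mul (h2.comp continuous_fst)))).mul continuous_const
  have hKdet : ∀ p, (K p).det = 1 := by
    intro p
    simp only [K]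
    rw [det_units_conj, det_mul, det_units_conj, det_diagonal, det_diagonal,
      Finset.prod_ite_eq' Finset.univ b, Finset.prod_ite_eq' Finset.univ (0 : Fin n)]
    simp [hne]
  have hone : ∀ s t, l t = 1 → K (s, t) = 1 := by
    intro s t ht
    have e1 : D t = 1 := by
      simp [D, ht]
    have e2 : E t = 1 := by
      simp [E, ht]
    simp only [K, e1, e2]
    simp
  apply homotopic_of_square (K := fun p => sing i (K p) (hKdet p))
  · apply Continuous.subtype_mk
    exact continuous_const.update i hKc
  · intro t
    apply Subtype.ext
    funext j
    change (h : Mat n) * diagonal (bas l i b t j) * ((h⁻¹ : (Mat n)ˣ) : Mat n) =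
      (Function.update (fun _ => 1) i (K (0, t)) : Fin k → Mat n) j
    by_cases hj : j = i
    · subst hj
      rw [Function.update_self]
      simp only [K, hv0, D, E, Units.val_one, one_mul, inv_one, mul_one, diagonal_mul_diagonal]
      have : bas l j b t j = fun a => (if a = b then l t else 1) * (if a = 0 then (l t)⁻¹ else 1) := by
        funext a; simp [bas]
      rw [this]
    · rw [Function.update_of_ne hj]
      have : bas l i b t j = fun _ => 1 := by funext a; simp [bas, hj]
      rw [this, diagonal_one, mul_one, Units.mul_inv]
  · intro t
    symm
    apply sing_one
    simp only [K, hv1, D, E, hP, diagonal_mul_diagonal]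
    have : (fun a => (if a = b then l t else 1) * ((fun a => if a = 0 then (l t)⁻¹ else 1) ∘
        (Equiv.swap (0 : Fin n) b).symm) a) = fun _ => (1 : ℂ) := by
      funext a
      by_cases ha : a = b
      · subst ha; simp [hne t]
      · have : Equiv.swap (0 : Fin n) b a ≠ 0 := by
          intro hh
          apply ha
          have := congrArg (Equiv.swap (0 : Fin n) b) hh
          simpa using this
        simp [ha, this]
    rw [this, diagonal_one, mul_one, Units.mul_inv]
  · intro s
    exact sing_one _ _ (hone s 0 hl0)
  · intro s
    exact sing_one _ _ (hone s 1 hl1)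

theorem torus_loop_null [NeZero n] {h : (Mat n)ˣ} (q : Path (base k n) (base k n))
    (hq : ∀ t, TDiag h (q t)) : q.Homotopic (Path.refl _) := by
  let d : I → Fin k → Fin n → ℂ := fun t => coo h (q t)
  have hdc : Continuous d := (continuous_coo h).comp q.continuous
  have hne : ∀ t i a, d t i a ≠ 0 := by
    intro t i a h0
    have := coo_prod (hq t) i
    rw [Finset.prod_eq_zero (Finset.mem_univ a) h0] at this
    exact zero_ne_one this
  have h0 : d 0 = 1 := by simp [d, coo_base]
  have h1 : d 1 = 1 := by simp [d, coo_base]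
  have hprod : NullL h (∏ ib : Fin k × Fin n, bas (k := k) (fun t => d t ib.1 ib.2) ib.1 ib.2) := by
    apply Finset.prod_induction _ (NullL h) (NullL.mul h) (NullL.one h)
    intro ib _
    apply bas_null
    · have hh : Continuous fun t => d t ib.1 := (continuous_apply ib.1).comp hdc
      have hh2 : Continuous fun t => d t ib.1 ib.2 := continuous_pi_iff.mp hh ib.2
      exact hh2
    · simp [h0]
    · simp [h1]
    · exact fun t => hne t _ _
  have e : (∏ ib : Fin k × Fin n, bas (k := k) (fun t => d t ib.1 ib.2) ib.1 ib.2) = d := by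
    funext t j a
    simp only [Finset.prod_apply, bas]
    rw [Fintype.prod_prod_type, Finset.prod_eq_single j]
    · simp only [if_true]
      rw [Finset.prod_mul_distrib, Finset.prod_ite_eq]
      simp only [Finset.mem_univ, if_true]
      by_cases ha : a = 0
      · simp only [ha, if_true, Finset.prod_inv_distrib]
        rw [show ∏ b, d t j b = 1 from coo_prod (hq t) j]; simp
      · simp [ha]
    · intro i _ hi
      apply Finset.prod_eq_one
      intro b _
      rw [if_neg (Ne.symm hi)]
    · simp
  rw [e] at hprod
  obtain ⟨hd, hn⟩ := hprod
  have : q = loopOf h d hd := by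
    apply Path.ext; funext t
    exact (dg_coo (hq t)).symm
  rw [this]; exact hn

end Torus

section Final

open unitInterval Topology Matrix

variable {n k : ℕ}

theorem good_base [NeZero n] (p : Path (base k n) (base k n)) (hp : Good (base k n) p) :
    p.Homotopic (Path.refl _) := by
  obtain ⟨z, h, q, hc, hN, hq, hpq⟩ := hp
  have hz : TDiag h z := by have := hq 1; simpa using this
  have hzb : z = base k n := by
    apply Subtype.ext; funext i
    have e := coo_eq hz i
    obtain ⟨r, hr⟩ := hN i
    have e2 : (base k n).1 i - z.1 i = (h : Mat n) * diagonal (fun a => 1 - coo h z i a) *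
        ((h⁻¹ : (Mat n)ˣ) : Mat n) := by
      have : diagonal (fun a => 1 - coo h z i a) = (1 : Mat n) - diagonal (coo h z i) := by
        rw [← diagonal_one, diagonal_sub]
      rw [this, mul_sub, sub_mul, ← e, mul_one, Units.mul_inv]
      rfl
    rw [e2, Units.conj_pow, diagonal_pow] at hr
    have e3 : diagonal ((fun a => 1 - coo h z i a) ^ r) = (0 : Mat n) := by
      have := congrArg (fun A => ((h⁻¹ : (Mat n)ˣ) : Mat n) * A * (h : Mat n)) hr
      simpa only [mul_assoc, Units.inv_mul_cancel_left, Units.inv_mul, mul_one, mul_zero, zero_mul] using this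
    have e4 : ∀ a, coo h z i a = 1 := by
      intro a
      have := congrFun (congrFun e3 a) a
      rw [diagonal_apply_eq] at this
      simp only [Pi.pow_apply, Matrix.zero_apply] at this
      exact (sub_eq_zero.mp (eq_zero_of_pow_eq_zero this)).symm
    rw [e, show coo h z i = fun _ => 1 from funext e4, diagonal_one, mul_one, Units.mul_inv]
    rfl
  subst hzb
  have h2 : nuPath (base k n) (base k n) hc = Path.refl _ := by
    apply Path.ext; funext t
    apply Subtype.ext; funext i
    change nu (lin t 1 1) = 1
    have : lin t (1 : Mat n) 1 = 1 := by unfold lin; module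
    rw [this]; exact nu_of_det det_one
  have h3 := torus_loop_null q hq
  rw [h2] at hpq
  rw [← Path.Homotopic.Quotient.eq] at *
  rw [hpq]
  simp [h3]

theorem exists_good [NeZero n] (x : CX k n) : ∃ p : Path (base k n) x, Good x p := by
  obtain ⟨z, h, hz, hc, hN⟩ := exists_ss x
  obtain ⟨q, hq⟩ := exists_torus_path hz
  have hcc := compat_of_nilp hc hN
  exact ⟨q.trans (nuPath z x hcc), z, h, q, hcc, hN, hq, Path.Homotopic.refl _⟩

theorem good_trans [NeZero n] (x y : CX k n) (γ : Path x y) (p : Path (base k n) x) (hp : Good x p) :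
    Good y (p.trans γ) := by
  refine local_global Good ?_ good_loc x y γ p hp
  rintro x p q hpq ⟨z, h, r, hc, h1, h2, h3⟩
  exact ⟨z, h, r, hc, h1, h2, hpq.symm.trans h3⟩

theorem loop_null [NeZero n] (γ : Path (base k n) (base k n)) : γ.Homotopic (Path.refl _) := by
  obtain ⟨p, hp⟩ := exists_good (base k n)
  have h1 := good_base p hp
  have h2 := good_base _ (good_trans _ _ γ p hp)
  rw [← Path.Homotopic.Quotient.eq] at *
  simpa [h1] using h2

theorem simply_connected_CX [NeZero n] : SimplyConnectedSpace (CX k n) := by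
  rw [simply_connected_iff_paths_homotopic']
  constructor
  · exact pathConnectedSpace_iff_eq.mpr ⟨base k n, by
      ext x
      simp only [Set.mem_univ, iff_true]
      exact ⟨(exists_good x).choose⟩⟩
  · intro x y p q
    obtain ⟨e, -⟩ := exists_good x
    have h := loop_null ((e.trans p).trans (q.symm.trans e.symm))
    rw [← Path.Homotopic.Quotient.eq] at *
    simp only [Path.Homotopic.Quotient.mk_trans, Path.Homotopic.Quotient.mk_symm,
      Path.Homotopic.Quotient.mk_refl] at h
    generalize Path.Homotopic.Quotient.mk p = P at *
    generalize Path.Homotopic.Quotient.mk q = Q at *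
    generalize Path.Homotopic.Quotient.mk e = E at *
    have h2 := congrArg (fun X => (E.symm.trans X).trans (E.trans Q)) h
    have hc : ∀ (w : CX k n) (X : Path.Homotopic.Quotient x w), E.symm.trans (E.trans X) = X := by
      intro w X; rw [← Path.Homotopic.Quotient.trans_assoc]; simp
    simpa [Path.Homotopic.Quotient.trans_assoc, hc] using h2

end Final

/-- comparison with the frozen space -/
def homeo (k n : ℕ) : CX k n ≃ₜ commTuples (Matrix.SpecialLinearGroup (Fin n) ℂ) k where
  toFun x := ⟨fun i => ⟨x.1 i, x.2.2 i⟩, fun i j => Subtype.ext (x.2.1 i j).eq⟩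
  invFun y := ⟨fun i => (y.1 i).1, fun i j => congrArg Subtype.val (y.2 i j), fun i => (y.1 i).2⟩
  left_inv x := rfl
  right_inv y := rfl
  continuous_toFun := by
    apply Continuous.subtype_mk
    apply continuous_pi
    intro i
    apply Continuous.subtype_mk
    exact (continuous_apply i).comp continuous_subtype_val
  continuous_invFun := by
    apply Continuous.subtype_mk
    apply continuous_pi
    intro i
    exact continuous_subtype_val.comp ((continuous_apply i).comp continuous_subtype_val)

end CommTup

/-- For every `k ≥ 1` and `n ≥ 2`, the space `Hom(ℤᵏ, SL(n,ℂ))` of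
commuting `k`-tuples in `SL(n,ℂ)` is path-connected and simply connected. -/
theorem stmt2 (k n : ℕ) (hk : 1 ≤ k) (hn : 2 ≤ n) :
    PathConnectedSpace (commTuples (Matrix.SpecialLinearGroup (Fin n) ℂ) k) ∧
    SimplyConnectedSpace (commTuples (Matrix.SpecialLinearGroup (Fin n) ℂ) k) := by
  have : NeZero n := ⟨by omega⟩
  have h1 : SimplyConnectedSpace (CommTup.CX k n) := CommTup.simply_connected_CX
  have h2 : SimplyConnectedSpace (commTuples (Matrix.SpecialLinearGroup (Fin n) ℂ) k) :=
    (CommTup.homeo k n).symm.toHomotopyEquiv.simplyConnectedSpace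
  exact ⟨inferInstance, h2⟩
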